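/- arXiv:1506.07741 — 4 statements merged into one kernel-verified Lean document; each statement's English description precedes it below -/
import Mathlib

section
/- Let n and r be positive integers with n ≥ r. The claw K_{1,n} (the star graph with one centre vertex joined to n leaves) is r-EKR if n ≥ 2r, and strictly r-EKR if n > 2r. -/
open Finset SimpleGraph
open scoped Classical

variable {V : Type*}

/-- The finset of independent sets of a finite graph `G`. -/
noncomputable def indepSets [Fintype V] (G : SimpleGraph V) : Finset (Finset V) :=
  univ.filter fun A => ∀ x ∈ A, ∀ y ∈ A, ¬ G.Adj x y

/-- The finset of independent sets of size `r` of `G`, i.e. `I^(r)(G)`. -/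
noncomputable def indepSetsSize [Fintype V] (G : SimpleGraph V) (r : ℕ) : Finset (Finset V) :=
  (indepSets G).filter fun A => A.card = r

/-- The `r`-star centred at `v`: independent sets of size `r` containing `v`. -/
noncomputable def ekrStar [Fintype V] (G : SimpleGraph V) (r : ℕ) (v : V) : Finset (Finset V) :=
  (indepSetsSize G r).filter fun A => v ∈ A

/-- A family of sets is pairwise intersecting. -/
def PairwiseIntersecting (𝒜 : Finset (Finset V)) : Prop :=
  ∀ A ∈ 𝒜, ∀ B ∈ 𝒜, (A ∩ B).Nonempty

/-- `G` is `r`-EKR: no pairwise intersecting subfamily of `I^(r)(G)` is larger than the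
largest `r`-star. -/
def IsEKR [Fintype V] (G : SimpleGraph V) (r : ℕ) : Prop :=
  ∀ 𝒜 ⊆ indepSetsSize G r, PairwiseIntersecting 𝒜 → ∃ v, 𝒜.card ≤ (ekrStar G r v).card

/-- `G` is strictly `r`-EKR: `r`-EKR, and every maximum-size pairwise intersecting
subfamily of `I^(r)(G)` is an `r`-star. -/
def IsStrictEKR [Fintype V] (G : SimpleGraph V) (r : ℕ) : Prop :=
  IsEKR G r ∧ ∀ 𝒜 ⊆ indepSetsSize G r, PairwiseIntersecting 𝒜 →
    (∀ ℬ ⊆ indepSetsSize G r, PairwiseIntersecting ℬ → ℬ.card ≤ 𝒜.card) →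
    ∃ v, 𝒜 = ekrStar G r v

/-!
For `r ≥ 2` an independent `r`-set of the claw avoids the centre, so it is an `r`-set of leaves and
the first claim is the Erdős–Ko–Rado theorem.

For the second claim let `𝒜` be an intersecting family of at least `(n - 1).choose (r - 1)` sets of
size `r` in `Fin n`, with `2 * r < n`, and let `ℱ` be the family of `(r + 1)`-sets contained in the
complement of a member of `𝒜`. The shadow of `ℱ` is disjoint from `𝒜`, so it has at most
`(n - 1).choose r` members, whereas Kruskal–Katona gives `ℱ` at least `(n - 1).choose (r + 1)`.
These bounds force `ℱ` to consist of all `(r + 1)`-subsets of an `(n - 1)`-set `S`; every `r`-subset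
of `S` is then in the shadow of `ℱ`, so all members of `𝒜` contain the point outside `S`.

The equality case of Kruskal–Katona is Keevash's argument: if `𝒜` is a nonempty family of
`(s + 1)`-sets and `#(∂ 𝒜) < k.choose s` then `(s + 1) * #𝒜 < #(∂ 𝒜) * (k - s)`. It is proved by
induction on `s`, comparing the link of each vertex `v` in `𝒜` with its link in `∂ 𝒜` and summing
over `v`.
-/

open scoped FinsetFamily

section Shadow

variable {α : Type*} [DecidableEq α] {𝒜 : Finset (Finset α)} {k r s : ℕ} {v : α}

lemma card_memberSubfamily (𝒜 : Finset (Finset α)) (v : α) :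
    #(𝒜.memberSubfamily v) = #{A ∈ 𝒜 | v ∈ A} :=
  card_image_of_injOn fun _ hA _ hB h =>
    erase_injOn' v (mem_filter.1 hA).2 (mem_filter.1 hB).2 h

lemma sum_card_memberSubfamily {S : Finset α} (h𝒜 : (𝒜 : Set (Finset α)).Sized r)
    (hS : ∀ A ∈ 𝒜, A ⊆ S) : ∑ v ∈ S, #(𝒜.memberSubfamily v) = r * #𝒜 := by
  calc ∑ v ∈ S, #(𝒜.memberSubfamily v)
      = ∑ v ∈ S, #{A ∈ 𝒜 | v ∈ A} := by simp_rw [card_memberSubfamily]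
    _ = ∑ A ∈ 𝒜, #{v ∈ S | v ∈ A} := sum_card_bipartiteAbove_eq_sum_card_bipartiteBelow _
    _ = ∑ _A ∈ 𝒜, r := sum_congr rfl fun A hA => by
        rw [filter_mem_eq_inter, inter_eq_right.2 (hS A hA), h𝒜 hA]
    _ = r * #𝒜 := by rw [sum_const, smul_eq_mul, mul_comm]

lemma sized_memberSubfamily (h𝒜 : (𝒜 : Set (Finset α)).Sized (r + 1)) :
    (𝒜.memberSubfamily v : Set (Finset α)).Sized r := fun A hA => by
  obtain ⟨hvA, hv⟩ := mem_memberSubfamily.1 (mem_coe.1 hA)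
  simpa [card_insert_of_notMem hv] using h𝒜 hvA

lemma memberSubfamily_nonempty (hv : v ∈ 𝒜.sup id) : (𝒜.memberSubfamily v).Nonempty := by
  obtain ⟨A, hA, hvA⟩ := mem_sup.1 hv
  exact ⟨A.erase v, mem_memberSubfamily.2 ⟨(insert_erase hvA).symm ▸ hA, notMem_erase v A⟩⟩

lemma shadow_memberSubfamily_subset : ∂ (𝒜.memberSubfamily v) ⊆ (∂ 𝒜).memberSubfamily v := by
  intro B hB
  obtain ⟨a, haB, hinsert⟩ := mem_shadow_iff_insert_mem.1 hB
  obtain ⟨hmem, hv⟩ := mem_memberSubfamily.1 hinsert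
  obtain ⟨hva, hvB⟩ := not_or.1 (mem_insert.not.1 hv)
  rw [mem_memberSubfamily, mem_shadow_iff_insert_mem]
  exact ⟨⟨a, by simp [Ne.symm hva, haB], by rwa [insert_comm]⟩, hvB⟩

lemma memberSubfamily_subset_nonMemberSubfamily_shadow :
    𝒜.memberSubfamily v ⊆ (∂ 𝒜).nonMemberSubfamily v := fun B hB => by
  obtain ⟨hmem, hv⟩ := mem_memberSubfamily.1 hB
  exact mem_nonMemberSubfamily.2 ⟨mem_shadow_iff_insert_mem.2 ⟨v, hv, hmem⟩, hv⟩

lemma card_memberSubfamily_add_card_memberSubfamily_shadow_le :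
    #(𝒜.memberSubfamily v) + #((∂ 𝒜).memberSubfamily v) ≤ #(∂ 𝒜) := by
  have hle := card_le_card (memberSubfamily_subset_nonMemberSubfamily_shadow (𝒜 := 𝒜) (v := v))
  have hsplit := card_memberSubfamily_add_card_nonMemberSubfamily v (∂ 𝒜)
  omega

lemma shadow_nonempty (h𝒜 : (𝒜 : Set (Finset α)).Sized (r + 1)) (hne : 𝒜.Nonempty) :
    (∂ 𝒜).Nonempty := by
  obtain ⟨A, hA⟩ := hne
  obtain ⟨a, ha⟩ := card_pos.1 (by rw [h𝒜 hA]; omega : 0 < #A)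
  exact ⟨A.erase a, erase_mem_shadow hA ha⟩

lemma shadow_powersetCard {S : Finset α} (hr : r < #S) :
    ∂ (S.powersetCard (r + 1)) = S.powersetCard r := by
  ext B
  simp only [mem_shadow_iff_insert_mem, mem_powersetCard]
  constructor
  · rintro ⟨a, ha, hsub, hcard⟩
    exact ⟨(subset_insert a B).trans hsub, by simpa [card_insert_of_notMem ha] using hcard⟩
  · rintro ⟨hBS, hB⟩
    obtain ⟨a, haS, haB⟩ := exists_mem_notMem_of_card_lt_card (hB.trans_lt hr)
    exact ⟨a, haB, insert_subset haS hBS, by rw [card_insert_of_notMem haB, hB]⟩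

lemma subset_sup_id_of_mem_shadow {B : Finset α} (hB : B ∈ ∂ 𝒜) : B ⊆ 𝒜.sup id := by
  obtain ⟨A, hA, hBA⟩ := exists_subset_of_mem_shadow hB
  exact hBA.trans (le_sup (f := id) hA)

lemma mul_card_lt_of_forall_memberSubfamily_le {c : ℕ}
    (h𝒜 : (𝒜 : Set (Finset α)).Sized (r + 1))
    (hle : ∀ v ∈ 𝒜.sup id, r * #(𝒜.memberSubfamily v) ≤ #((∂ 𝒜).memberSubfamily v) * c)
    (hlt : ∃ v ∈ 𝒜.sup id, r * #(𝒜.memberSubfamily v) < #((∂ 𝒜).memberSubfamily v) * c) :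
    (r + 1) * #𝒜 < #(∂ 𝒜) * c := by
  have hsum := sum_lt_sum hle hlt
  rw [← mul_sum, ← sum_mul, sum_card_memberSubfamily h𝒜 fun A hA => le_sup (f := id) hA,
    sum_card_memberSubfamily h𝒜.shadow fun B hB => subset_sup_id_of_mem_shadow hB,
    Nat.add_sub_cancel, mul_assoc] at hsum
  exact lt_of_mul_lt_mul_left hsum (Nat.zero_le r)

-- The slack `c` covers the non-strict (`c = 0`) and the strict (`c = 1`) comparison of links.
lemma mul_card_memberSubfamily_add_le {c : ℕ} (hcard : #(∂ 𝒜) + c ≤ (k + 1).choose (s + 1))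
    (hv : k.choose s ≤ #((∂ 𝒜).memberSubfamily v)) :
    (s + 1) * (#(𝒜.memberSubfamily v) + c) ≤ #((∂ 𝒜).memberSubfamily v) * (k - s) := by
  have hadd := card_memberSubfamily_add_card_memberSubfamily_shadow_le (𝒜 := 𝒜) (v := v)
  have hmul : (s + 1) * (#(𝒜.memberSubfamily v) + c) + (s + 1) * #((∂ 𝒜).memberSubfamily v) ≤
      (k + 1) * #((∂ 𝒜).memberSubfamily v) :=
    calc _ = (s + 1) * (#(𝒜.memberSubfamily v) + #((∂ 𝒜).memberSubfamily v) + c) := by ring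
      _ ≤ (s + 1) * (k + 1).choose (s + 1) := by gcongr; omega
      _ = (k + 1) * k.choose s := by rw [Nat.add_one_mul_choose_eq, mul_comm]
      _ ≤ (k + 1) * #((∂ 𝒜).memberSubfamily v) := by gcongr
  rw [← Nat.add_sub_add_right k 1 s, mul_comm _ (k + 1 - (s + 1)), Nat.sub_mul]
  exact Nat.le_sub_of_add_le hmul

-- For `s = 0` and `#(∂ 𝒜) = k.choose s` even the non-strict inequality fails; the strict hypothesis
-- makes that case vacuous, so the induction can start there.
theorem mul_card_lt_of_card_shadow_lt (h𝒜 : (𝒜 : Set (Finset α)).Sized (s + 1))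
    (hne : 𝒜.Nonempty) (hcard : #(∂ 𝒜) < k.choose s) : (s + 1) * #𝒜 < #(∂ 𝒜) * (k - s) := by
  induction s generalizing k 𝒜 with
  | zero =>
    have hpos := (shadow_nonempty h𝒜 hne).card_pos
    rw [Nat.choose_zero_right] at hcard
    omega
  | succ s ih =>
    cases k with
    | zero => simp at hcard
    | succ k =>
      have hlocal : ∀ v ∈ 𝒜.sup id,
          (s + 1) * #(𝒜.memberSubfamily v) < #((∂ 𝒜).memberSubfamily v) * (k - s) := by
        intro v hv
        rcases le_or_gt (k.choose s) #((∂ 𝒜).memberSubfamily v) with hlarge | hsmall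
        · exact (Nat.mul_lt_mul_of_pos_left (Nat.lt_add_one _) s.succ_pos).trans_le
            (mul_card_memberSubfamily_add_le hcard hlarge)
        · have hsub := card_le_card (shadow_memberSubfamily_subset (𝒜 := 𝒜) (v := v))
          exact (ih (sized_memberSubfamily h𝒜) (memberSubfamily_nonempty hv)
            (hsub.trans_lt hsmall)).trans_le (Nat.mul_le_mul_right _ hsub)
      obtain ⟨B, hB⟩ := shadow_nonempty h𝒜 hne
      obtain ⟨v, hvB⟩ := card_pos.1 (by rw [h𝒜.shadow hB]; omega : 0 < #B)
      have hv := subset_sup_id_of_mem_shadow hB hvB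
      rw [Nat.add_sub_add_right]
      exact mul_card_lt_of_forall_memberSubfamily_le h𝒜 (fun v hv => (hlocal v hv).le)
        ⟨v, hv, hlocal v hv⟩

lemma choose_le_card_memberSubfamily_shadow (h𝒜 : (𝒜 : Set (Finset α)).Sized (s + 2))
    (hshadow : #(∂ 𝒜) ≤ (k + 1).choose (s + 1)) (hcard : (k + 1).choose (s + 2) ≤ #𝒜)
    (hv : v ∈ 𝒜.sup id) : k.choose s ≤ #((∂ 𝒜).memberSubfamily v) := by
  have hlt : ∀ w ∈ 𝒜.sup id, #((∂ 𝒜).memberSubfamily w) < k.choose s →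
      (s + 1) * #(𝒜.memberSubfamily w) < #((∂ 𝒜).memberSubfamily w) * (k - s) := by
    intro w hw hsmall
    have hsub := card_le_card (shadow_memberSubfamily_subset (𝒜 := 𝒜) (v := w))
    exact (mul_card_lt_of_card_shadow_lt (sized_memberSubfamily h𝒜) (memberSubfamily_nonempty hw)
      (hsub.trans_lt hsmall)).trans_le (Nat.mul_le_mul_right _ hsub)
  have hle : ∀ w ∈ 𝒜.sup id,
      (s + 1) * #(𝒜.memberSubfamily w) ≤ #((∂ 𝒜).memberSubfamily w) * (k - s) := by
    intro w hw
    rcases le_or_gt (k.choose s) #((∂ 𝒜).memberSubfamily w) with hlarge | hsmall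
    · exact mul_card_memberSubfamily_add_le (c := 0) hshadow hlarge
    · exact (hlt w hw hsmall).le
  by_contra! hsmall
  have hstrict := mul_card_lt_of_forall_memberSubfamily_le h𝒜 hle ⟨v, hv, hlt v hv hsmall⟩
  refine hstrict.not_ge ?_
  calc #(∂ 𝒜) * (k - s) ≤ (k + 1).choose (s + 1) * (k - s) := by gcongr
    _ = (s + 2) * (k + 1).choose (s + 2) := by
      rw [mul_comm (s + 2), Nat.choose_succ_right_eq, Nat.add_sub_add_right]
    _ ≤ (s + 2) * #𝒜 := by gcongr

lemma card_sup_id_le_of_card_shadow_le (h𝒜 : (𝒜 : Set (Finset α)).Sized (s + 2)) (hsk : s ≤ k)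
    (hshadow : #(∂ 𝒜) ≤ (k + 1).choose (s + 1)) (hcard : (k + 1).choose (s + 2) ≤ #𝒜) :
    #(𝒜.sup id) ≤ k + 1 := by
  refine le_of_mul_le_mul_right ?_ (Nat.choose_pos hsk)
  calc #(𝒜.sup id) * k.choose s
      ≤ ∑ v ∈ 𝒜.sup id, #((∂ 𝒜).memberSubfamily v) :=
        card_nsmul_le_sum _ _ _ fun v hv =>
          choose_le_card_memberSubfamily_shadow h𝒜 hshadow hcard hv
    _ = (s + 1) * #(∂ 𝒜) :=
        sum_card_memberSubfamily h𝒜.shadow fun B hB => subset_sup_id_of_mem_shadow hB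
    _ ≤ (s + 1) * (k + 1).choose (s + 1) := by gcongr
    _ = (k + 1) * k.choose s := by rw [Nat.add_one_mul_choose_eq, mul_comm]

theorem exists_eq_powersetCard_of_card_shadow_le {m : ℕ}
    (h𝒜 : (𝒜 : Set (Finset α)).Sized (r + 1)) (hr : 0 < r) (hrm : r < m)
    (hshadow : #(∂ 𝒜) ≤ m.choose r) (hcard : m.choose (r + 1) ≤ #𝒜) :
    ∃ S : Finset α, #S = m ∧ 𝒜 = S.powersetCard (r + 1) := by
  obtain ⟨s, rfl⟩ := Nat.exists_eq_add_one.2 hr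
  obtain ⟨k, rfl⟩ := Nat.exists_eq_add_one.2 (hr.trans hrm)
  have hsub : 𝒜 ⊆ (𝒜.sup id).powersetCard (s + 2) := fun A hA =>
    mem_powersetCard.2 ⟨le_sup (f := id) hA, h𝒜 hA⟩
  have hchoose : (k + 1).choose (s + 2) ≤ (#(𝒜.sup id)).choose (s + 2) := by
    simpa using hcard.trans (card_le_card hsub)
  have hsup_le : #(𝒜.sup id) ≤ k + 1 := card_sup_id_le_of_card_shadow_le h𝒜 (by omega) hshadow hcard
  have hle_sup : k + 1 ≤ #(𝒜.sup id) := by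
    by_contra! hlt
    have hmono : (#(𝒜.sup id)).choose (s + 2) ≤ k.choose (s + 2) :=
      Nat.choose_le_choose _ (Nat.le_of_lt_succ hlt)
    have hpascal : (k + 1).choose (s + 2) = k.choose (s + 1) + k.choose (s + 2) :=
      Nat.choose_succ_succ' k (s + 1)
    have hpos : 0 < k.choose (s + 1) := Nat.choose_pos (by omega)
    omega
  have hsup : #(𝒜.sup id) = k + 1 := hsup_le.antisymm hle_sup
  exact ⟨𝒜.sup id, hsup, eq_of_subset_of_card_le hsub (by rwa [card_powersetCard, hsup])⟩

end Shadow

section Intersecting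

lemma disjoint_shadow_iterate_compls {α : Type*} [DecidableEq α] [Fintype α]
    {𝒜 : Finset (Finset α)} (h𝒜 : (𝒜 : Set (Finset α)).Intersecting) (i : ℕ) :
    Disjoint 𝒜 (∂^[i] 𝒜ᶜˢ) := by
  refine disjoint_right.2 fun B hB hB𝒜 => ?_
  obtain ⟨C, hC, hBC, -⟩ := mem_shadow_iterate_iff_exists_sdiff.1 hB
  exact h𝒜 hB𝒜 (mem_compls.1 hC) (disjoint_of_subset_left hBC disjoint_compl_right)

lemma card_add_card_le_choose {α : Type*} [Fintype α] {𝒜 ℬ : Finset (Finset α)} {r : ℕ}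
    (h𝒜 : (𝒜 : Set (Finset α)).Sized r) (hℬ : (ℬ : Set (Finset α)).Sized r) (hdisj : Disjoint 𝒜 ℬ) :
    #𝒜 + #ℬ ≤ (Fintype.card α).choose r := by
  rw [← card_union_of_disjoint hdisj]
  exact Set.Sized.card_le (by simpa only [coe_union] using Set.sized_union.2 ⟨h𝒜, hℬ⟩)

variable {n r : ℕ} {𝒜 : Finset (Finset (Fin n))}

lemma choose_le_card_shadow_iterate_compls (hr : 0 < r) (hrn : 2 * r < n)
    (h𝒜 : (𝒜 : Set (Finset (Fin n))).Sized r) (hcard : (n - 1).choose (r - 1) ≤ #𝒜) :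
    (n - 1).choose (r + 1) ≤ #(∂^[n - 2 * r - 1] 𝒜ᶜˢ) := by
  have hcompls : (n - 1).choose (n - r) ≤ #𝒜ᶜˢ := by
    rwa [card_compls, Nat.choose_symm_of_eq_add (by omega : n - 1 = n - r + (r - 1))]
  have hlovasz := kruskal_katona_lovasz_form (i := n - 2 * r - 1) (by omega) (by omega)
    (Nat.sub_le n 1) (by simpa using h𝒜.compls) hcompls
  rwa [show n - r - (n - 2 * r - 1) = r + 1 by omega] at hlovasz

theorem exists_forall_mem_of_intersecting_of_choose_le_card (hr : 0 < r) (hrn : 2 * r < n)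
    (h𝒜 : (𝒜 : Set (Finset (Fin n))).Intersecting) (hsized : (𝒜 : Set (Finset (Fin n))).Sized r)
    (hcard : (n - 1).choose (r - 1) ≤ #𝒜) : ∃ v, ∀ A ∈ 𝒜, v ∈ A := by
  set ℱ := ∂^[n - 2 * r - 1] 𝒜ᶜˢ with hℱ
  have hℱ_sized : (ℱ : Set (Finset (Fin n))).Sized (r + 1) := by
    have hiter := hsized.compls.shadow_iterate (k := n - 2 * r - 1)
    rwa [Fintype.card_fin, show n - r - (n - 2 * r - 1) = r + 1 by omega] at hiter
  have hdisj : Disjoint 𝒜 (∂ ℱ) := by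
    rw [hℱ, ← Function.iterate_succ_apply' shadow]
    exact disjoint_shadow_iterate_compls h𝒜 _
  have hshadow : #(∂ ℱ) ≤ (n - 1).choose r := by
    have hsum := card_add_card_le_choose hsized hℱ_sized.shadow hdisj
    rw [Fintype.card_fin, Nat.choose_eq_choose_pred_add (by omega) hr] at hsum
    omega
  obtain ⟨S, hS, hℱS⟩ := exists_eq_powersetCard_of_card_shadow_le hℱ_sized hr (by omega) hshadow
    (choose_le_card_shadow_iterate_compls hr hrn hsized hcard)
  obtain ⟨v, hv⟩ : ∃ v, Sᶜ = {v} := card_eq_one.1 (by rw [card_compl, Fintype.card_fin]; omega)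
  refine ⟨v, fun A hA => ?_⟩
  by_contra hvA
  refine disjoint_left.1 hdisj hA ?_
  rw [hℱS, shadow_powersetCard (by omega), mem_powersetCard]
  exact ⟨compl_le_compl_iff_le.1 (by simpa [hv] using hvA), hsized hA⟩

end Intersecting

section EKR

variable [Fintype V] {G : SimpleGraph V} {r : ℕ} {v : V} {A : Finset V}

lemma mem_indepSetsSize :
    A ∈ indepSetsSize G r ↔ (∀ x ∈ A, ∀ y ∈ A, ¬ G.Adj x y) ∧ #A = r := by
  simp [indepSetsSize, indepSets]

lemma mem_ekrStar : A ∈ ekrStar G r v ↔ A ∈ indepSetsSize G r ∧ v ∈ A := mem_filter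

lemma ekrStar_subset_indepSetsSize : ekrStar G r v ⊆ indepSetsSize G r := filter_subset _ _

lemma pairwiseIntersecting_ekrStar : PairwiseIntersecting (ekrStar G r v) := fun _ hA _ hB =>
  ⟨v, mem_inter.2 ⟨(mem_ekrStar.1 hA).2, (mem_ekrStar.1 hB).2⟩⟩

lemma isStrictEKR_of_exists_subset_ekrStar
    (h : ∀ 𝒜 ⊆ indepSetsSize G r, PairwiseIntersecting 𝒜 → (∀ v, #(ekrStar G r v) ≤ #𝒜) →
      ∃ v, 𝒜 ⊆ ekrStar G r v) : IsStrictEKR G r := by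
  refine ⟨fun 𝒜 h𝒜 hint => ?_, fun 𝒜 h𝒜 hint hmax => ?_⟩
  · by_contra! hlt
    obtain ⟨v, hv⟩ := h 𝒜 h𝒜 hint fun v => (hlt v).le
    exact (hlt v).not_ge (card_le_card hv)
  · have hstar_le v : #(ekrStar G r v) ≤ #𝒜 :=
      hmax _ ekrStar_subset_indepSetsSize pairwiseIntersecting_ekrStar
    obtain ⟨v, hv⟩ := h 𝒜 h𝒜 hint hstar_le
    exact ⟨v, eq_of_subset_of_card_le hv (hstar_le v)⟩

lemma isStrictEKR_one [Nonempty V] (G : SimpleGraph V) : IsStrictEKR G 1 := by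
  refine isStrictEKR_of_exists_subset_ekrStar fun 𝒜 h𝒜 hint _ => ?_
  obtain rfl | ⟨A, hA⟩ := 𝒜.eq_empty_or_nonempty
  · exact ⟨Classical.arbitrary V, empty_subset _⟩
  · obtain ⟨v, rfl⟩ := card_eq_one.1 (mem_indepSetsSize.1 (h𝒜 hA)).2
    refine ⟨v, fun B hB => mem_ekrStar.2 ⟨h𝒜 hB, ?_⟩⟩
    simpa [Finset.Nonempty] using hint _ hA _ hB

end EKR

section Claw

lemma pairwiseIntersecting_map_mapEmbedding {α β : Type*} (f : α ↪ β) (ℬ : Finset (Finset α)) :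
    PairwiseIntersecting (ℬ.map (mapEmbedding f).toEmbedding) ↔
      (ℬ : Set (Finset α)).Intersecting := by
  simp [PairwiseIntersecting, Set.Intersecting, ← map_inter, not_disjoint_iff_nonempty_inter]

section Subsingleton

variable {U W : Type*} [Fintype U] [Fintype W] [Subsingleton U] {r : ℕ}

lemma inl_notMem_of_mem_indepSetsSize (hr : 2 ≤ r) {A : Finset (U ⊕ W)}
    (hA : A ∈ indepSetsSize (completeBipartiteGraph U W) r) (u : U) : Sum.inl u ∉ A := by
  intro hu
  obtain ⟨hindep, hcard⟩ := mem_indepSetsSize.1 hA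
  obtain ⟨u' | w, hmem, hne⟩ := exists_mem_ne (by omega : 1 < #A) (Sum.inl u)
  · exact hne (congrArg Sum.inl (Subsingleton.elim u' u))
  · exact hindep _ hu _ hmem (by simp)

lemma indepSetsSize_completeBipartiteGraph (hr : 2 ≤ r) :
    indepSetsSize (completeBipartiteGraph U W) r =
      (univ.powersetCard r).map (mapEmbedding (.inr : W ↪ U ⊕ W)).toEmbedding := by
  ext A
  simp only [mem_map, mem_powersetCard_univ, RelEmbedding.coe_toEmbedding, mapEmbedding_apply]
  constructor
  · intro hA
    have hmap : A.toRight.map .inr = A := by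
      ext (u | w)
      · simp [inl_notMem_of_mem_indepSetsSize hr hA u]
      · simp
    exact ⟨A.toRight, by rw [← card_map .inr, hmap, (mem_indepSetsSize.1 hA).2], hmap⟩
  · rintro ⟨B, hB, rfl⟩
    exact mem_indepSetsSize.2 ⟨by simp, by rw [card_map, hB]⟩

lemma card_ekrStar_inr (hr : 2 ≤ r) (w : W) :
    #(ekrStar (completeBipartiteGraph U W) r (Sum.inr w)) =
      (Fintype.card W - 1).choose (r - 1) := by
  have hstar : ekrStar (completeBipartiteGraph U W) r (Sum.inr w) =
      {B ∈ (univ : Finset W).powersetCard r | {w} ⊆ B}.map (mapEmbedding .inr).toEmbedding := by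
    ext A
    rw [mem_ekrStar, indepSetsSize_completeBipartiteGraph hr]
    simp only [mem_map, mem_filter, singleton_subset_iff]
    constructor
    · rintro ⟨⟨B, hB, rfl⟩, hw⟩
      exact ⟨B, ⟨hB, (mem_map' .inr).1 hw⟩, rfl⟩
    · rintro ⟨B, ⟨hB, hw⟩, rfl⟩
      exact ⟨⟨B, hB, rfl⟩, mem_map_of_mem _ hw⟩
  rw [hstar, card_map, card_filter_powersetCard_subset _ _ _ (subset_univ _) (by simp; omega),
    card_univ, card_singleton]

lemma exists_sized_intersecting_map_eq (hr : 2 ≤ r) {𝒜 : Finset (Finset (U ⊕ W))}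
    (h𝒜 : 𝒜 ⊆ indepSetsSize (completeBipartiteGraph U W) r) (hint : PairwiseIntersecting 𝒜) :
    ∃ ℬ : Finset (Finset W), (ℬ : Set (Finset W)).Sized r ∧
      (ℬ : Set (Finset W)).Intersecting ∧ ℬ.map (mapEmbedding .inr).toEmbedding = 𝒜 := by
  rw [indepSetsSize_completeBipartiteGraph hr] at h𝒜
  obtain ⟨ℬ, hℬ, rfl⟩ := subset_map_iff.1 h𝒜
  exact ⟨ℬ, subset_powersetCard_univ_iff.1 hℬ,
    (pairwiseIntersecting_map_mapEmbedding _ ℬ).1 hint, rfl⟩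

end Subsingleton

variable {n r : ℕ}

lemma isEKR_completeBipartiteGraph_fin_one (hr : 2 ≤ r) (hrn : 2 * r ≤ n) :
    IsEKR (completeBipartiteGraph (Fin 1) (Fin n)) r := by
  intro 𝒜 h𝒜 hint
  obtain ⟨ℬ, hsized, hℬ, rfl⟩ := exists_sized_intersecting_map_eq hr h𝒜 hint
  refine ⟨Sum.inr ⟨0, by omega⟩, ?_⟩
  rw [card_map, card_ekrStar_inr hr, Fintype.card_fin]
  exact erdos_ko_rado hℬ hsized (by omega)

lemma isStrictEKR_completeBipartiteGraph_fin_one (hr : 2 ≤ r) (hrn : 2 * r < n) :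
    IsStrictEKR (completeBipartiteGraph (Fin 1) (Fin n)) r := by
  refine isStrictEKR_of_exists_subset_ekrStar fun 𝒜 h𝒜 hint hstar => ?_
  obtain ⟨ℬ, hsized, hℬ, rfl⟩ := exists_sized_intersecting_map_eq hr h𝒜 hint
  have hcard : (n - 1).choose (r - 1) ≤ #ℬ := by
    simpa [card_ekrStar_inr hr] using hstar (Sum.inr ⟨0, by omega⟩)
  obtain ⟨v, hv⟩ :=
    exists_forall_mem_of_intersecting_of_choose_le_card (by omega) hrn hℬ hsized hcard
  refine ⟨Sum.inr v, fun A hA => mem_ekrStar.2 ⟨h𝒜 hA, ?_⟩⟩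
  obtain ⟨B, hB, rfl⟩ := mem_map.1 hA
  exact mem_map_of_mem _ (hv B hB)

end Claw

/-- EKR theorem for claws. For positive integers `n ≥ r`, the claw
`K_{1,n}` is `r`-EKR if `n ≥ 2r` and strictly `r`-EKR if `n > 2r`. -/
theorem claw_EKR (n r : ℕ) (hn : 0 < n) (hr : 0 < r) (hrn : r ≤ n) :
    (2 * r ≤ n → IsEKR (completeBipartiteGraph (Fin 1) (Fin n)) r) ∧
    (2 * r < n → IsStrictEKR (completeBipartiteGraph (Fin 1) (Fin n)) r) := by
  obtain rfl | hr2 : r = 1 ∨ 2 ≤ r := by omega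
  · have hstrict := isStrictEKR_one (completeBipartiteGraph (Fin 1) (Fin n))
    exact ⟨fun _ => hstrict.1, fun _ => hstrict⟩
  · exact ⟨isEKR_completeBipartiteGraph_fin_one hr2, isStrictEKR_completeBipartiteGraph_fin_one hr2⟩
end

section
/- Let n and r be positive integers with n ≥ 2r, and let G be an elongated claw with n leaves that has at least one short limb. Then G is r-EKR. -/
open Finset SimpleGraph
open scoped Classical

variable {V : Type*}

/-- An elongated claw: a tree with a designated root in which every vertex other than
the root has degree at most 2. -/
def IsElongatedClaw [Fintype V] (G : SimpleGraph V) (root : V) : Prop :=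
  G.IsTree ∧ ∀ v, v ≠ root → G.degree v ≤ 2

/-- A depth-two claw: an elongated claw in which every leaf is at distance 2 from the root. -/
def IsDepthTwoClaw [Fintype V] (G : SimpleGraph V) (root : V) : Prop :=
  IsElongatedClaw G root ∧ ∀ v, G.degree v = 1 → G.dist root v = 2

/-!
The largest star is centred at the leaf `x` of a short limb. Let `v` be a leaf at distance at least
two from the root `c`, let `w` be its neighbour and `u` the other neighbour of `w`, and let `𝒜` be
an intersecting family of independent `r`-sets. Replace `v` by `w` in every member of `𝒜` containing
`v`, unless the member contains `u` or the outcome already belongs to `𝒜`; the members so excepted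
still meet pairwise after `v` is deleted from them. This bounds `#𝒜` by the sum of the sizes of an
intersecting family of `G - v` (with the same `r`) and one of `G - v - w` (with `r - 1`), while the
stars centred at `x` satisfy the reverse inequality. The second graph loses at most one of the limbs
at `c`, so there are still at least `2 (r - 1)` of them. When all vertices are within distance one
of `c` and `r ≥ 2`, the claim is the Erdős–Ko–Rado theorem on the neighbours of `c`.
-/

section SetFamily

variable {𝒜 : Finset (Finset V)} {T : Finset V} {u v w x : V} {r : ℕ}

lemma card_le_choose_of_pairwiseIntersecting (h𝒜 : PairwiseIntersecting 𝒜)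
    (h𝒜T : 𝒜 ⊆ T.powersetCard r) (hr : 2 * r ≤ #T) : #𝒜 ≤ (#T - 1).choose (r - 1) := by
  obtain ⟨φ, hφ⟩ : ∃ φ : Fin #T ↪ V, univ.map φ = T :=
    ⟨T.equivFin.symm.toEmbedding.trans (.subtype _), by
      rw [← Finset.map_map, map_univ_equiv, univ_eq_attach, attach_map_val]⟩
  obtain ⟨ℬ, hℬ, rfl⟩ : ∃ ℬ ⊆ univ.powersetCard r, 𝒜 = ℬ.map (mapEmbedding φ).toEmbedding := by
    rwa [← subset_map_iff, ← powersetCard_map, hφ]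
  rw [card_map]
  have hsized : (ℬ : Set (Finset (Fin #T))).Sized r := fun A hA ↦ (mem_powersetCard.mp (hℬ hA)).2
  refine erdos_ko_rado (fun A hA B hB hAB ↦ ?_) hsized (by omega)
  have hinter := h𝒜 _ (mem_map_of_mem _ hA) _ (mem_map_of_mem _ hB)
  exact not_disjoint_iff_nonempty_inter.mpr hinter ((disjoint_map φ).mpr hAB)

lemma card_le_card_star_of_pairwiseIntersecting (h𝒜 : PairwiseIntersecting 𝒜)
    (h𝒜T : 𝒜 ⊆ T.powersetCard r) (hr₀ : 0 < r) (hr : 2 * r ≤ #T) (hx : x ∈ T) :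
    #𝒜 ≤ #{A ∈ T.powersetCard r | x ∈ A} := by
  have hstar := card_filter_powersetCard_subset {x} T r (singleton_subset_iff.mpr hx) hr₀
  simp only [singleton_subset_iff, card_singleton] at hstar
  rw [hstar]
  exact card_le_choose_of_pairwiseIntersecting h𝒜 h𝒜T hr

/-- The sets `A.erase v`, for those `A ∈ 𝒜` containing `v` in which `v` is not to be replaced by
`w`: either `u ∈ A`, or the replacement would produce a set already in `𝒜`. -/
noncomputable def blockedLinks (𝒜 : Finset (Finset V)) (u v w : V) : Finset (Finset V) :=
  {B ∈ 𝒜.memberSubfamily v | u ∈ B ∨ insert w B ∈ 𝒜}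

/-- What remains of `𝒜` once the members counted by `blockedLinks 𝒜 u v w` are discarded and `v`
is replaced by `w` in all others. -/
noncomputable def shiftedFamily (𝒜 : Finset (Finset V)) (u v w : V) : Finset (Finset V) :=
  𝒜.nonMemberSubfamily v ∪
    {B ∈ 𝒜.memberSubfamily v | ¬(u ∈ B ∨ insert w B ∈ 𝒜)}.image (insert w)

lemma notMem_of_mem_memberSubfamily (hvw : ∀ A ∈ 𝒜, v ∈ A → w ∉ A) {B : Finset V}
    (hB : B ∈ 𝒜.memberSubfamily v) : w ∉ insert v B :=
  hvw _ (mem_memberSubfamily.mp hB).1 (mem_insert_self v B)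

lemma card_shiftedFamily_add_card_blockedLinks (hvw : ∀ A ∈ 𝒜, v ∈ A → w ∉ A) :
    #(shiftedFamily 𝒜 u v w) + #(blockedLinks 𝒜 u v w) = #𝒜 := by
  have hinj : Set.InjOn (insert w) (𝒜.memberSubfamily v : Set (Finset V)) :=
    insert_erase_invOn.2.injOn.mono fun B hB hwB ↦
      notMem_of_mem_memberSubfamily hvw hB (mem_insert_of_mem hwB)
  have hdisj : Disjoint (𝒜.nonMemberSubfamily v)
      ({B ∈ 𝒜.memberSubfamily v | ¬(u ∈ B ∨ insert w B ∈ 𝒜)}.image (insert w)) := by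
    refine disjoint_left.mpr fun A hA hA' ↦ ?_
    obtain ⟨B, hB, rfl⟩ := mem_image.mp hA'
    exact (mem_filter.mp hB).2 (.inr (mem_nonMemberSubfamily.mp hA).1)
  have hsplit := card_filter_add_card_filter_not (s := 𝒜.memberSubfamily v)
    fun B ↦ u ∈ B ∨ insert w B ∈ 𝒜
  have htotal := card_memberSubfamily_add_card_nonMemberSubfamily v 𝒜
  rw [shiftedFamily, blockedLinks, card_union_of_disjoint hdisj, 
    card_image_of_injOn (hinj.mono (coe_subset.mpr (filter_subset _ _)))]
  omega

lemma PairwiseIntersecting.shiftedFamily (h𝒜 : PairwiseIntersecting 𝒜) (u v w : V) :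
    PairwiseIntersecting (shiftedFamily 𝒜 u v w) := by
  have hmixed : ∀ A ∈ 𝒜.nonMemberSubfamily v, ∀ B ∈ 𝒜.memberSubfamily v,
      (A ∩ insert w B).Nonempty := by
    intro A hA B hB
    obtain ⟨hA, hvA⟩ := mem_nonMemberSubfamily.mp hA
    have hinter := h𝒜 A hA _ (mem_memberSubfamily.mp hB).1
    rw [inter_insert_of_notMem hvA] at hinter
    exact hinter.mono (inter_subset_inter_left (subset_insert w B))
  intro A hA B hB
  rw [_root_.shiftedFamily, mem_union, mem_image] at hA hB
  rcases hA with hA | ⟨A, hA, rfl⟩ <;> rcases hB with hB | ⟨B, hB, rfl⟩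
  · exact h𝒜 A (mem_nonMemberSubfamily.mp hA).1 B (mem_nonMemberSubfamily.mp hB).1
  · exact hmixed A hA B (mem_filter.mp hB).1
  · exact inter_comm B (insert w A) ▸ hmixed B hB A (mem_filter.mp hA).1
  · exact ⟨w, mem_inter.mpr ⟨mem_insert_self w A, mem_insert_self w B⟩⟩

lemma PairwiseIntersecting.blockedLinks (h𝒜 : PairwiseIntersecting 𝒜)
    (hvw : ∀ A ∈ 𝒜, v ∈ A → w ∉ A) : PairwiseIntersecting (blockedLinks 𝒜 u v w) := by
  have hreplaced : ∀ A ∈ 𝒜.memberSubfamily v, insert w A ∈ 𝒜 → ∀ B ∈ 𝒜.memberSubfamily v,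
      (A ∩ B).Nonempty := by
    intro A hA hwA B hB
    have hvA : v ∉ A := (mem_memberSubfamily.mp hA).2
    have hinter := h𝒜 _ hwA _ (mem_memberSubfamily.mp hB).1
    rwa [insert_inter_of_notMem (notMem_of_mem_memberSubfamily hvw hB),
      inter_insert_of_notMem hvA] at hinter
  intro A hA B hB
  obtain ⟨hA, huA | hwA⟩ := mem_filter.mp hA
  · obtain ⟨hB, huB | hwB⟩ := mem_filter.mp hB
    · exact ⟨u, mem_inter.mpr ⟨huA, huB⟩⟩
    · exact inter_comm B A ▸ hreplaced B hB hwB A hA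
  · exact hreplaced A hA hwA B (mem_filter.mp hB).1

end SetFamily

section EKRCentre

/-- `u - w - v` is a pendant path of `G[S]`: the only neighbour of `v` is `w`, and `w` has no other
neighbour than `v` and `u`. Neither `u ∈ S` nor the adjacency of `u` and `w` is imposed. -/
structure IsPendantPath (G : SimpleGraph V) (S : Finset V) (u w v : V) : Prop where
  mem_end : v ∈ S
  mem_mid : w ∈ S
  adj : G.Adj v w
  eq_mid_of_adj : ∀ y ∈ S, G.Adj v y → y = w
  eq_or_eq_of_adj : ∀ y ∈ S, G.Adj w y → y = v ∨ y = u

variable [Fintype V] {G : SimpleGraph V} {S T A : Finset V} {c u v w x : V} {r : ℕ}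

/-- The family `I^(r)(G[S])`, with vertices kept in `V`. -/
noncomputable def indepSetsIn (G : SimpleGraph V) (S : Finset V) (r : ℕ) : Finset (Finset V) :=
  {A ∈ indepSetsSize G r | A ⊆ S}

/-- `G[S]` is `r`-EKR and its `r`-star centred at `x` is a largest one. -/
def IsEKRCentre (G : SimpleGraph V) (S : Finset V) (r : ℕ) (x : V) : Prop :=
  ∀ 𝒜 ⊆ indepSetsIn G S r, PairwiseIntersecting 𝒜 → #𝒜 ≤ #{A ∈ indepSetsIn G S r | x ∈ A}

lemma mem_indepSetsIn : A ∈ indepSetsIn G S r ↔ G.IsIndepSet A ∧ #A = r ∧ A ⊆ S := by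
  have hindep : (∀ a ∈ A, ∀ b ∈ A, ¬G.Adj a b) ↔ G.IsIndepSet A :=
    ⟨fun h a ha b hb _ ↦ h a ha b hb, fun h a ha b hb hab ↦ h ha hb hab.ne hab⟩
  simp only [indepSetsIn, indepSetsSize, indepSets, mem_filter, mem_univ, true_and, hindep,
    and_assoc]

lemma IsEKRCentre.isEKR (h : IsEKRCentre G univ r x) : IsEKR G r := by
  have huniv : indepSetsIn G univ r = indepSetsSize G r := by simp [indepSetsIn]
  intro 𝒜 h𝒜 hint
  refine ⟨x, ?_⟩
  rw [ekrStar, ← huniv]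
  exact h 𝒜 (huniv ▸ h𝒜) hint

lemma insert_mem_indepSetsIn (hA : A ∈ indepSetsIn G S r) (hv : v ∈ S) (hvA : v ∉ A)
    (hadj : ∀ y ∈ A, ¬G.Adj v y) : insert v A ∈ indepSetsIn G S (r + 1) := by
  obtain ⟨hindep, hcard, hAS⟩ := mem_indepSetsIn.mp hA
  refine mem_indepSetsIn.mpr ⟨?_, by rw [card_insert_of_notMem hvA, hcard], insert_subset hv hAS⟩
  rw [coe_insert]
  exact hindep.insert fun y hy _ ↦ ⟨hadj y hy, fun h ↦ hadj y hy h.symm⟩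

lemma mem_indepSetsIn_of_insert_mem (hA : insert v A ∈ indepSetsIn G S (r + 1)) (hvA : v ∉ A) :
    A ∈ indepSetsIn G (S.erase v) r := by
  obtain ⟨hindep, hcard, hAS⟩ := mem_indepSetsIn.mp hA
  rw [card_insert_of_notMem hvA, Nat.add_right_cancel_iff] at hcard
  rw [insert_subset_iff] at hAS
  exact mem_indepSetsIn.mpr ⟨hindep.mono (coe_subset.mpr (subset_insert v A)), hcard,
    subset_erase.mpr ⟨hAS.2, hvA⟩⟩

lemma mem_indepSetsIn_erase : A ∈ indepSetsIn G (S.erase v) r ↔ A ∈ indepSetsIn G S r ∧ v ∉ A := by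
  simp only [mem_indepSetsIn, subset_erase, and_assoc]

lemma notMem_of_mem_indepSetsIn (hA : A ∈ indepSetsIn G S r) (hvw : G.Adj v w) (hv : v ∈ A) :
    w ∉ A :=
  fun hw ↦ (mem_indepSetsIn.mp hA).1 hv hw hvw.ne hvw

lemma IsPendantPath.shiftedFamily_subset (hp : IsPendantPath G S u w v)
    {𝒜 : Finset (Finset V)} (h𝒜 : 𝒜 ⊆ indepSetsIn G S (r + 1)) :
    shiftedFamily 𝒜 u v w ⊆ indepSetsIn G (S.erase v) (r + 1) := by
  refine union_subset (fun A hA ↦ ?_) (image_subset_iff.mpr fun B hB ↦ ?_)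
  · rw [mem_nonMemberSubfamily] at hA
    exact mem_indepSetsIn_erase.mpr ⟨h𝒜 hA.1, hA.2⟩
  · obtain ⟨hB, hBu⟩ := mem_filter.mp hB
    obtain ⟨hvB, hv⟩ := mem_memberSubfamily.mp hB
    have hB' := mem_indepSetsIn_of_insert_mem (h𝒜 hvB) hv
    have hw := notMem_of_mem_indepSetsIn (h𝒜 hvB) hp.adj (mem_insert_self v B)
    refine insert_mem_indepSetsIn hB' (mem_erase.mpr ⟨hp.adj.ne', hp.mem_mid⟩)
      (fun h ↦ hw (mem_insert_of_mem h)) fun y hy hwy ↦ ?_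
    have hyS : y ∈ S := mem_of_mem_erase ((mem_indepSetsIn.mp hB').2.2 hy)
    rcases hp.eq_or_eq_of_adj y hyS hwy with rfl | rfl
    · exact hv hy
    · exact hBu (.inl hy)

lemma blockedLinks_subset_indepSetsIn (hvw : G.Adj v w) {𝒜 : Finset (Finset V)}
    (h𝒜 : 𝒜 ⊆ indepSetsIn G S (r + 1)) :
    blockedLinks 𝒜 u v w ⊆ indepSetsIn G ((S.erase v).erase w) r := by
  intro B hB
  obtain ⟨hvB, hv⟩ := mem_memberSubfamily.mp (mem_filter.mp hB).1
  have hw := notMem_of_mem_indepSetsIn (h𝒜 hvB) hvw (mem_insert_self v B)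
  exact mem_indepSetsIn_erase.mpr
    ⟨mem_indepSetsIn_of_insert_mem (h𝒜 hvB) hv, fun h ↦ hw (mem_insert_of_mem h)⟩

lemma IsPendantPath.card_star_add_card_star_le (hp : IsPendantPath G S u w v) (r : ℕ) (x : V) :
    #{A ∈ indepSetsIn G (S.erase v) (r + 1) | x ∈ A} +
      #{A ∈ indepSetsIn G ((S.erase v).erase w) r | x ∈ A} ≤
    #{A ∈ indepSetsIn G S (r + 1) | x ∈ A} := by
  rw [add_comm,
    ← card_memberSubfamily_add_card_nonMemberSubfamily v {A ∈ indepSetsIn G S (r + 1) | x ∈ A}]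
  refine add_le_add (card_le_card fun A hA ↦ ?_) (card_le_card fun A hA ↦ ?_)
  · rw [mem_filter, mem_indepSetsIn_erase, mem_indepSetsIn_erase] at hA
    obtain ⟨⟨⟨hA, hv⟩, hw⟩, hx⟩ := hA
    have hvA : insert v A ∈ indepSetsIn G S (r + 1) :=
      insert_mem_indepSetsIn hA hp.mem_end hv fun y hy hvy ↦
        hw (hp.eq_mid_of_adj y ((mem_indepSetsIn.mp hA).2.2 hy) hvy ▸ hy)
    exact mem_memberSubfamily.mpr ⟨mem_filter.mpr ⟨hvA, mem_insert_of_mem hx⟩, hv⟩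
  · rw [mem_filter, mem_indepSetsIn_erase] at hA
    exact mem_nonMemberSubfamily.mpr ⟨mem_filter.mpr ⟨hA.1.1, hA.2⟩, hA.1.2⟩

lemma IsPendantPath.isEKRCentre (hp : IsPendantPath G S u w v)
    (hv : IsEKRCentre G (S.erase v) (r + 1) x) (hvw : IsEKRCentre G ((S.erase v).erase w) r x) :
    IsEKRCentre G S (r + 1) x := by
  intro 𝒜 h𝒜 hint
  have hnot : ∀ A ∈ 𝒜, v ∈ A → w ∉ A := fun A hA ↦ notMem_of_mem_indepSetsIn (h𝒜 hA) hp.adj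
  calc #𝒜 = #(shiftedFamily 𝒜 u v w) + #(blockedLinks 𝒜 u v w) :=
        (card_shiftedFamily_add_card_blockedLinks hnot).symm
    _ ≤ #{A ∈ indepSetsIn G (S.erase v) (r + 1) | x ∈ A} +
          #{A ∈ indepSetsIn G ((S.erase v).erase w) r | x ∈ A} :=
        add_le_add (hv _ (hp.shiftedFamily_subset h𝒜) (hint.shiftedFamily u v w))
          (hvw _ (blockedLinks_subset_indepSetsIn hp.adj h𝒜) (hint.blockedLinks hnot))
    _ ≤ #{A ∈ indepSetsIn G S (r + 1) | x ∈ A} := hp.card_star_add_card_star_le r x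

lemma isEKRCentre_of_le_one (hx : x ∈ S) (hr : r ≤ 1) : IsEKRCentre G S r x := by
  intro 𝒜 h𝒜 hint
  have hsize : ∀ A ∈ 𝒜, #A = r := fun A hA ↦ (mem_indepSetsIn.mp (h𝒜 hA)).2.1
  rcases 𝒜.eq_empty_or_nonempty with rfl | ⟨A₀, hA₀⟩
  · simp
  have hr_eq : r = 1 := by
    have hne : A₀.Nonempty := (hint A₀ hA₀ A₀ hA₀).mono inter_subset_left
    have := hne.card_pos
    have := hsize A₀ hA₀
    omega
  have h𝒜_le : #𝒜 ≤ 1 := by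
    refine card_le_one.mpr fun A hA B hB ↦ ?_
    have hinter : 1 ≤ #(A ∩ B) := (hint A hA B hB).card_pos
    have hA_eq := eq_of_subset_of_card_le (inter_subset_left (s₁ := A) (s₂ := B))
      (by rw [hsize A hA]; omega)
    have hB_eq := eq_of_subset_of_card_le (inter_subset_right (s₁ := A) (s₂ := B))
      (by rw [hsize B hB]; omega)
    exact hA_eq.symm.trans hB_eq
  refine h𝒜_le.trans (card_pos.mpr ⟨{x}, mem_filter.mpr ⟨?_, mem_singleton_self x⟩⟩)
  exact mem_indepSetsIn.mpr ⟨by simp, by simp [hr_eq], by simpa using hx⟩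

lemma indepSetsIn_insert_of_two_le (hT : G.IsIndepSet T) (hc : ∀ y ∈ T, G.Adj c y) (hr : 2 ≤ r) :
    indepSetsIn G (insert c T) r = T.powersetCard r := by
  ext A
  rw [mem_indepSetsIn, mem_powersetCard]
  refine ⟨fun ⟨hindep, hcard, hA⟩ ↦ ⟨?_, hcard⟩, fun ⟨hA, hcard⟩ ↦
    ⟨hT.mono (coe_subset.mpr hA), hcard, hA.trans (subset_insert c T)⟩⟩
  refine (subset_insert_iff_of_notMem fun hcA ↦ ?_).mp hA
  obtain ⟨b, hb, hbc⟩ := exists_mem_ne (by omega : 1 < #A) c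
  exact hindep hcA hb hbc.symm (hc b (mem_of_mem_insert_of_ne (hA hb) hbc))

lemma isEKRCentre_insert_of_two_le (hT : G.IsIndepSet T) (hc : ∀ y ∈ T, G.Adj c y) (hx : x ∈ T)
    (hr : 2 ≤ r) (hcard : 2 * r ≤ #T) : IsEKRCentre G (insert c T) r x := by
  intro 𝒜 h𝒜 hint
  rw [indepSetsIn_insert_of_two_le hT hc hr] at h𝒜 ⊢
  exact card_le_card_star_of_pairwiseIntersecting hint h𝒜 (by omega) hcard hx

end EKRCentre

section RootClosed

variable {G : SimpleGraph V} {S : Finset V} {c u v w : V}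

lemma exists_adj_dist_lt (hG : G.Connected) (hvc : v ≠ c) :
    ∃ u, G.Adj v u ∧ G.dist c u < G.dist c v := by
  obtain ⟨p, hp⟩ := hG.exists_walk_length_eq_dist c v
  have hnil : ¬p.Nil := Walk.not_nil_of_ne hvc.symm
  refine ⟨p.penultimate, (Walk.adj_penultimate hnil).symm, ?_⟩
  calc G.dist c p.penultimate ≤ p.dropLast.length := dist_le _
    _ < p.length := by rw [← Walk.length_dropLast_add_one hnil]; exact Nat.lt_succ_self _
    _ = G.dist c v := hp

lemma eq_of_adj_of_dist_lt (hG : G.IsTree) (huv : G.Adj u v) (hwv : G.Adj w v)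
    (hu : G.dist c u < G.dist c v) (hw : G.dist c w < G.dist c v) : u = w := by
  have hgeodesic : ∀ y, G.Adj y v → G.dist c y < G.dist c v →
      ∃ p : G.Walk c v, p.IsPath ∧ p.penultimate = y := by
    intro y hyv hlt
    obtain ⟨p, hp⟩ := hG.connected.exists_walk_length_eq_dist c y
    have hdist := hG.dist_eq_dist_add_one_of_adj c hyv
    refine ⟨p.concat hyv, Walk.isPath_of_length_eq_dist _ ?_, Walk.penultimate_concat p hyv⟩
    rw [Walk.length_concat, hp]
    omega
  obtain ⟨p, hp, rfl⟩ := hgeodesic u huv hu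
  obtain ⟨q, hq, rfl⟩ := hgeodesic w hwv hw
  rw [(hG.existsUnique_path c v).unique hp hq]

/-- `S` contains `c`, and from each of its vertices one can walk down to `c` along a geodesic inside
`S`; in a tree this says that `S` spans a subtree containing `c`. -/
structure IsRootClosed (G : SimpleGraph V) (c : V) (S : Finset V) : Prop where
  root_mem : c ∈ S
  exists_closer : ∀ v ∈ S, v ≠ c → ∃ u ∈ S, G.Adj v u ∧ G.dist c u < G.dist c v

lemma isRootClosed_univ [Fintype V] (hG : G.Connected) (c : V) : IsRootClosed G c univ where
  root_mem := mem_univ c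
  exists_closer _ _ hvc := by simpa only [mem_univ, true_and] using exists_adj_dist_lt hG hvc

lemma IsRootClosed.erase (hS : IsRootClosed G c S) (hvc : v ≠ c)
    (hv : ∀ y ∈ S, G.Adj v y → G.dist c y ≤ G.dist c v) : IsRootClosed G c (S.erase v) where
  root_mem := mem_erase.mpr ⟨hvc.symm, hS.root_mem⟩
  exists_closer y hy hyc := by
    obtain ⟨u, huS, hyu, hlt⟩ := hS.exists_closer y (mem_of_mem_erase hy) hyc
    refine ⟨u, mem_erase.mpr ⟨?_, huS⟩, hyu, hlt⟩
    rintro rfl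
    exact hlt.not_ge (hv y (mem_of_mem_erase hy) hyu.symm)

lemma IsRootClosed.erase_end (hS : IsRootClosed G c S) (hp : IsPendantPath G S u w v)
    (hlt : G.dist c w < G.dist c v) : IsRootClosed G c (S.erase v) := by
  refine hS.erase (fun hvc ↦ by simp [hvc] at hlt) fun y hy hvy ↦ ?_
  rw [hp.eq_mid_of_adj y hy hvy]
  exact hlt.le

lemma IsRootClosed.erase_end_erase_mid (hS : IsRootClosed G c S) (hp : IsPendantPath G S u w v)
    (hu : G.dist c u < G.dist c w) (hw : G.dist c w < G.dist c v) :
    IsRootClosed G c ((S.erase v).erase w) := by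
  refine (hS.erase_end hp hw).erase (fun hwc ↦ by simp [hwc] at hu) fun y hy hwy ↦ ?_
  obtain ⟨hyv, hyS⟩ := mem_erase.mp hy
  rw [(hp.eq_or_eq_of_adj y hyS hwy).resolve_left hyv]
  exact hu.le

lemma isIndepSet_filter_adj (hG : G.IsTree) (c : V) (S : Finset V) :
    G.IsIndepSet ({y ∈ S | G.Adj c y} : Finset V) := by
  intro a ha b hb _ hab
  refine hG.dist_ne_of_adj c hab ?_
  rw [dist_eq_one_iff_adj.mpr (mem_filter.mp ha).2, dist_eq_one_iff_adj.mpr (mem_filter.mp hb).2]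

lemma filter_adj_erase_of_one_lt_dist (S : Finset V) (hv : 1 < G.dist c v) :
    {y ∈ S.erase v | G.Adj c y} = {y ∈ S | G.Adj c y} := by
  rw [filter_erase, erase_eq_of_notMem]
  exact fun h ↦ hv.ne' (dist_eq_one_iff_adj.mpr (mem_filter.mp h).2)

lemma IsRootClosed.eq_insert_filter_adj (hS : IsRootClosed G c S) (hG : G.Connected)
    (hdist : ∀ y ∈ S, G.dist c y ≤ 1) : S = insert c {y ∈ S | G.Adj c y} := by
  refine Subset.antisymm (fun y hy ↦ ?_) (insert_subset hS.root_mem (filter_subset _ S))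
  rw [mem_insert, mem_filter, or_iff_not_imp_left]
  intro hyc
  have hpos := hG.pos_dist_of_ne (Ne.symm hyc)
  exact ⟨hy, dist_eq_one_iff_adj.mp (le_antisymm (hdist y hy) hpos)⟩

end RootClosed

namespace IsElongatedClaw

variable [Fintype V] {G : SimpleGraph V} {S : Finset V} {c u v w x : V} {r : ℕ}

/- Handshake: a non-root vertex falls short of degree `2` exactly when it is a leaf, and then by
`1`, while the degrees of a tree sum to `2 (|V| - 1)`. -/
lemma card_leaves_erase_root [Nontrivial V] (hG : IsElongatedClaw G c) :
    #(({v | G.degree v = 1} : Finset V).erase c) = G.degree c := by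
  have hedges := hG.1.card_edgeFinset
  have hdegrees := G.sum_degrees_eq_twice_card_edges
  rw [← add_sum_erase univ _ (mem_univ c)] at hdegrees
  have hdefect : ∑ v ∈ univ.erase c, (G.degree v + if G.degree v = 1 then 1 else 0) =
      ∑ v ∈ univ.erase c, 2 := by
    refine sum_congr rfl fun v hv ↦ ?_
    have hle := hG.2 v (ne_of_mem_erase hv)
    have hpos := hG.1.connected.preconnected.degree_pos_of_nontrivial v
    split_ifs <;> omega
  rw [sum_add_distrib, ← card_filter, filter_erase, sum_const, card_erase_of_mem (mem_univ c),
    card_univ, smul_eq_mul] at hdefect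
  omega

lemma card_leaves_eq_degree_root (hG : IsElongatedClaw G c)
    (hleaves : 2 < #{v | G.degree v = 1}) : #{v | G.degree v = 1} = G.degree c := by
  have : Nontrivial V := by
    rw [← Fintype.one_lt_card_iff_nontrivial]
    exact (Nat.lt_of_succ_lt hleaves).trans_le (card_le_univ _)
  have herase := hG.card_leaves_erase_root
  rcases eq_or_ne (G.degree c) 1 with hroot | hroot
  · have := pred_card_le_card_erase (s := {v | G.degree v = 1}) (a := c)
    omega
  · rwa [erase_eq_of_notMem (by simpa using hroot)] at herase

lemma eq_or_eq_of_adj (hG : IsElongatedClaw G c) (hwc : w ≠ c) (huv : u ≠ v) (hwv : G.Adj w v)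
    (hwu : G.Adj w u) {y : V} (hwy : G.Adj w y) : y = v ∨ y = u := by
  have hpair : {v, u} = G.neighborFinset w := by
    refine eq_of_subset_of_card_le (by simp [insert_subset_iff, hwv, hwu]) ?_
    rw [card_neighborFinset_eq_degree, card_pair huv.symm]
    exact hG.2 w hwc
  have hy : y ∈ G.neighborFinset w := (G.mem_neighborFinset w y).mpr hwy
  rwa [← hpair, mem_insert, mem_singleton] at hy

lemma exists_isPendantPath (hG : IsElongatedClaw G c) (hS : IsRootClosed G c S)
    (hdeep : ∃ y ∈ S, 1 < G.dist c y) :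
    ∃ u w v, IsPendantPath G S u w v ∧ G.dist c u < G.dist c w ∧ G.dist c w < G.dist c v := by
  obtain ⟨v, hvS, hmax⟩ := exists_max_image S (G.dist c) ⟨c, hS.root_mem⟩
  obtain ⟨y, hyS, hy⟩ := hdeep
  have hv : 1 < G.dist c v := hy.trans_le (hmax y hyS)
  obtain ⟨w, hwS, hvw, hw_lt⟩ := hS.exists_closer v hvS (by rintro rfl; simp at hv)
  have hwc : w ≠ c := by
    rintro rfl
    exact hv.ne' (dist_eq_one_iff_adj.mpr hvw.symm)
  obtain ⟨u, -, hwu, hu_lt⟩ := hS.exists_closer w hwS hwc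
  have huv : u ≠ v := by
    rintro rfl
    exact hu_lt.not_gt hw_lt
  refine ⟨u, w, v, ⟨hvS, hwS, hvw, fun z hzS hvz ↦ ?_, fun z _ hwz ↦ ?_⟩, hu_lt, hw_lt⟩
  · have hz_lt : G.dist c z < G.dist c v :=
      lt_of_le_of_ne (hmax z hzS) (hG.1.dist_ne_of_adj c hvz).symm
    exact eq_of_adj_of_dist_lt hG.1 hvz.symm hvw.symm hz_lt hw_lt
  · exact hG.eq_or_eq_of_adj hwc huv hvw.symm hwu hwz

theorem isEKRCentre (hG : IsElongatedClaw G c) (hcx : G.Adj c x) (hx : G.degree x = 1)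
    (hS : IsRootClosed G c S) (hxS : x ∈ S) (hr : 2 * r ≤ #{y ∈ S | G.Adj c y}) :
    IsEKRCentre G S r x := by
  induction S using Finset.strongInduction generalizing r with | H S ih => ?_
  obtain hr_le | hr_two := le_or_gt r 1
  · exact isEKRCentre_of_le_one hxS hr_le
  by_cases hdeep : ∃ y ∈ S, 1 < G.dist c y
  · obtain ⟨u, w, v, hp, hu_lt, hw_lt⟩ := hG.exists_isPendantPath hS hdeep
    obtain ⟨s, rfl⟩ : ∃ s, r = s + 1 := ⟨r - 1, by omega⟩
    have hv : 1 < G.dist c v := by omega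
    have hxv : x ≠ v := by
      rintro rfl
      exact hv.ne' (dist_eq_one_iff_adj.mpr hcx)
    have hxw : x ≠ w := by
      rintro rfl
      have hvc := (degree_eq_one_iff_existsUnique_adj.mp hx).unique hp.adj.symm hcx.symm
      simp [hvc] at hw_lt
    have hlimbs := filter_adj_erase_of_one_lt_dist S hv
    have hlimbs' : #{y ∈ S | G.Adj c y} - 1 ≤ #{y ∈ (S.erase v).erase w | G.Adj c y} := by
      rw [filter_erase, hlimbs]
      exact pred_card_le_card_erase
    have hxSv : x ∈ S.erase v := mem_erase.mpr ⟨hxv, hxS⟩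
    have hSv : S.erase v ⊂ S := erase_ssubset hp.mem_end
    exact hp.isEKRCentre
      (ih _ hSv (hS.erase_end hp hw_lt) hxSv (by rwa [hlimbs]))
      (ih _ ((erase_subset w _).trans_ssubset hSv) (hS.erase_end_erase_mid hp hu_lt hw_lt)
        (mem_erase.mpr ⟨hxw, hxSv⟩) (by omega))
  · push Not at hdeep
    have hT := isIndepSet_filter_adj hG.1 c S
    rw [hS.eq_insert_filter_adj hG.1.connected hdeep]
    exact isEKRCentre_insert_of_two_le hT (fun y hy ↦ (mem_filter.mp hy).2)
      (mem_filter.mpr ⟨hxS, hcx⟩) hr_two hr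

end IsElongatedClaw

/-- If `G` is an elongated claw with `n` leaves and at least one short
limb (a leaf adjacent to the root), and `n ≥ 2r`, then `G` is `r`-EKR. -/
theorem elongatedClaw_shortLimb_EKR {V : Type*} [Fintype V] (n r : ℕ)
    (hn : 0 < n) (hr : 0 < r) (hnr : 2 * r ≤ n)
    (G : SimpleGraph V) (root : V) (hG : IsElongatedClaw G root)
    (hleaves : (univ.filter fun v => G.degree v = 1).card = n)
    (hshort : ∃ x, G.Adj root x ∧ G.degree x = 1) :
    IsEKR G r := by
  obtain ⟨x, hadj, hx⟩ := hshort
  obtain hr_le | hr_two := le_or_gt r 1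
  · exact (isEKRCentre_of_le_one (mem_univ x) hr_le).isEKR
  have hlimbs : 2 * r ≤ #{y | G.Adj root y} := by
    rw [← neighborFinset_eq_filter, card_neighborFinset_eq_degree,
      ← hG.card_leaves_eq_degree_root (by omega), hleaves]
    exact hnr
  have hroot : IsRootClosed G root univ := isRootClosed_univ hG.1.connected root
  exact (hG.isEKRCentre hadj hx hroot (mem_univ x) hlimbs).isEKR
end

section
/- Let n and r be positive integers with n ≥ r, and let G be a depth-two claw with n leaves. Then for every leaf x of G, |I^(r)_x(G)| = C(n−1, r−1)·2^(r−1) + C(n−1, r−2), and this quantity is at least |I^(r)_v(G)| for every vertex v of G; that is, the largest r-star of G is centred at a leaf and has this size. -/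
open Finset SimpleGraph
open scoped Classical

variable {V : Type*}

/-!
Independent sets containing `v` are independent sets of the subgraph left after deleting the closed
neighbourhood of `v`, which also gives the deletion recurrence for counting independent sets.
Deleting the root of a depth-two claw leaves a perfect matching on `2n` vertices (leaf and
neighbour), and `k` disjoint edges have `C(k, r) 2 ^ r` independent `r`-sets. Hence the star of size
`r + 1` centred at the root counts the `r`-sets of leaves; the one centred at a neighbour of the
root counts the `r`-sets independent in `n - 1` disjoint edges; and the one centred at a leaf counts
the latter together with the `(r - 1)`-sets of the other leaves, which are completed by the root.
The bound at the root is Pascal's rule.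
-/

section IndependentSubsets

variable {G : SimpleGraph V} {W : Finset V} {v : V} {r : ℕ}

/-- The independent sets of size `r` of the subgraph of `G` induced by `W`, as subsets of the
ambient vertex type. -/
noncomputable def indepSubsets (G : SimpleGraph V) (W : Finset V) (r : ℕ) : Finset (Finset V) :=
  {A ∈ W.powersetCard r | G.IsIndepSet A}

lemma mem_indepSubsets {A : Finset V} :
    A ∈ indepSubsets G W r ↔ A ⊆ W ∧ #A = r ∧ G.IsIndepSet A := by
  simp [indepSubsets, mem_powersetCard, and_assoc]

lemma isIndepSet_insert_iff_of_notMem {A : Finset V} (hv : v ∉ A) :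
    G.IsIndepSet (insert v A : Finset V) ↔ G.IsIndepSet A ∧ ∀ u ∈ A, Gᶜ.Adj v u := by
  rw [coe_insert, ← isClique_compl, isClique_insert_of_notMem (mod_cast hv), isClique_compl]
  rfl

@[simp]
lemma card_indepSubsets_zero : #(indepSubsets G W 0) = 1 := by
  simp [indepSubsets, filter_singleton]

lemma card_indepSubsets_of_isIndepSet (hW : G.IsIndepSet W) :
    #(indepSubsets G W r) = (#W).choose r := by
  rw [indepSubsets, filter_true_of_mem, card_powersetCard]
  exact fun A hA ↦ hW.mono (mod_cast (mem_powersetCard.1 hA).1)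

lemma card_filter_mem_indepSubsets_succ (hv : v ∈ W) :
    #{A ∈ indepSubsets G W (r + 1) | v ∈ A} = #(indepSubsets G {u ∈ W | Gᶜ.Adj v u} r) := by
  have notMem_of_subset {A : Finset V} (hA : A ⊆ {u ∈ W | Gᶜ.Adj v u}) : v ∉ A := fun h ↦
    Gᶜ.irrefl (mem_filter.1 (hA h)).2
  refine card_nbij' (fun A ↦ A.erase v) (insert v) ?_ ?_ ?_ ?_
  · intro A hA
    obtain ⟨⟨hAW, hcard, hindep⟩, hvA⟩ := by simpa [mem_indepSubsets] using hA
    rw [← insert_erase hvA, isIndepSet_insert_iff_of_notMem (notMem_erase v A)] at hindep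
    refine mem_indepSubsets.2 ⟨fun u hu ↦ ?_, ?_, hindep.1⟩
    · exact mem_filter.2 ⟨hAW (mem_of_mem_erase hu), hindep.2 u hu⟩
    · rw [card_erase_of_mem hvA, hcard, Nat.add_sub_cancel]
  · intro A hA
    obtain ⟨hAW, hcard, hindep⟩ := mem_indepSubsets.1 hA
    have hvA := notMem_of_subset hAW
    refine mem_filter.2 ⟨mem_indepSubsets.2 ⟨?_, ?_, ?_⟩, mem_insert_self v A⟩
    · exact insert_subset hv (hAW.trans (filter_subset _ _))
    · rw [card_insert_of_notMem hvA, hcard]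
    · exact (isIndepSet_insert_iff_of_notMem hvA).2
        ⟨hindep, fun u hu ↦ (mem_filter.1 (hAW hu)).2⟩
  · exact fun A hA ↦ insert_erase (mem_filter.1 hA).2
  · exact fun A hA ↦ erase_insert (notMem_of_subset (mem_indepSubsets.1 hA).1)

lemma filter_notMem_indepSubsets :
    {A ∈ indepSubsets G W r | v ∉ A} = indepSubsets G (W.erase v) r := by
  ext A
  simp only [mem_filter, mem_indepSubsets, subset_erase]
  tauto

lemma card_indepSubsets_succ (hv : v ∈ W) :
    #(indepSubsets G W (r + 1)) =
      #(indepSubsets G (W.erase v) (r + 1)) + #(indepSubsets G {u ∈ W | Gᶜ.Adj v u} r) := by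
  rw [← card_filter_mem_indepSubsets_succ hv, ← filter_notMem_indepSubsets,
    add_comm #(filter _ _), card_filter_add_card_filter_not]

lemma ekrStar_eq_filter_indepSubsets [Fintype V] :
    ekrStar G r v = {A ∈ indepSubsets G univ r | v ∈ A} := by
  ext A
  have indep_iff : (∀ x ∈ A, ∀ y ∈ A, ¬G.Adj x y) ↔ G.IsIndepSet A :=
    ⟨fun h x hx y hy _ ↦ h x hx y hy, fun h x hx y hy hxy ↦ h hx hy hxy.ne hxy⟩
  simp only [ekrStar, indepSetsSize, indepSets, mem_filter, mem_univ, true_and, indep_iff,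
    mem_indepSubsets, subset_univ]
  tauto

lemma card_ekrStar_succ [Fintype V] :
    #(ekrStar G (r + 1) v) = #(indepSubsets G {u | Gᶜ.Adj v u} r) := by
  rw [ekrStar_eq_filter_indepSubsets, card_filter_mem_indepSubsets_succ (mem_univ v)]

lemma card_ekrStar_one [Fintype V] : #(ekrStar G 1 v) = 1 := by
  rw [card_ekrStar_succ, card_indepSubsets_zero]

end IndependentSubsets

section InducedPerfectMatching

variable {G : SimpleGraph V} {W : Finset V} {u v : V}

lemma card_erase_erase_of_mem (hv : v ∈ W) (hu : u ∈ W) (hvu : v ≠ u) :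
    #((W.erase v).erase u) = #W - 2 := by
  rw [card_erase_of_mem (mem_erase.2 ⟨hvu.symm, hu⟩), card_erase_of_mem hv, Nat.sub_sub]

/-- The subgraph of `G` induced by `W` is a perfect matching: every vertex of `W` has exactly one
neighbour in `W`. -/
def InducesPerfectMatching (G : SimpleGraph V) (W : Finset V) : Prop :=
  ∀ v ∈ W, ∃! u, u ∈ W ∧ G.Adj v u

namespace InducesPerfectMatching

lemma filter_compl_adj_eq (hW : InducesPerfectMatching G W) (hv : v ∈ W) (hu : u ∈ W)
    (hvu : G.Adj v u) : {w ∈ W | Gᶜ.Adj v w} = (W.erase v).erase u := by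
  ext w
  have adj_iff (hw : w ∈ W) : G.Adj v w ↔ w = u :=
    ⟨fun h ↦ (hW v hv).unique ⟨hw, h⟩ ⟨hu, hvu⟩, fun h ↦ h ▸ hvu⟩
  simp only [mem_filter, mem_erase, compl_adj]
  grind

lemma erase_erase (hW : InducesPerfectMatching G W) (hv : v ∈ W) (hu : u ∈ W)
    (hvu : G.Adj v u) : InducesPerfectMatching G ((W.erase v).erase u) := by
  intro w hw
  simp only [mem_erase] at hw
  obtain ⟨hwu, hwv, hwW⟩ := hw
  obtain ⟨w', ⟨hw'W, hww'⟩, hunique⟩ := hW w hwW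
  have hw'v : w' ≠ v := by
    rintro rfl
    exact hwu ((hW w' hv).unique ⟨hwW, hww'.symm⟩ ⟨hu, hvu⟩)
  have hw'u : w' ≠ u := by
    rintro rfl
    exact hwv ((hW w' hu).unique ⟨hwW, hww'.symm⟩ ⟨hv, hvu.symm⟩)
  exact ⟨w', ⟨by simp [*], hww'⟩, fun x hx ↦
    hunique x ⟨mem_of_mem_erase (mem_of_mem_erase hx.1), hx.2⟩⟩

lemma card_indepSubsets_succ_of_adj (hW : InducesPerfectMatching G W) (hv : v ∈ W) (hu : u ∈ W)
    (hvu : G.Adj v u) (r : ℕ) :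
    #(indepSubsets G W (r + 1)) = #(indepSubsets G ((W.erase v).erase u) (r + 1)) +
      2 * #(indepSubsets G ((W.erase v).erase u) r) := by
  have hu' : u ∈ W.erase v := mem_erase.2 ⟨hvu.ne', hu⟩
  have filter_u : {w ∈ W.erase v | Gᶜ.Adj u w} = (W.erase v).erase u := by
    rw [filter_erase, hW.filter_compl_adj_eq hu hv hvu.symm, erase_idem, erase_right_comm]
  rw [card_indepSubsets_succ hv, card_indepSubsets_succ hu', filter_u,
    hW.filter_compl_adj_eq hv hu hvu]
  ring

theorem card_indepSubsets (hW : InducesPerfectMatching G W) {k : ℕ} (hk : #W = 2 * k) (r : ℕ) :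
    #(indepSubsets G W r) = k.choose r * 2 ^ r := by
  induction k generalizing W r with
  | zero =>
    obtain rfl : W = ∅ := card_eq_zero.1 hk
    rw [card_indepSubsets_of_isIndepSet (by simp)]
    cases r <;> simp
  | succ k ih =>
    cases r with
    | zero => simp
    | succ r =>
      obtain ⟨v, hv⟩ : W.Nonempty := card_pos.1 (by lia)
      obtain ⟨u, ⟨hu, hvu⟩, -⟩ := hW v hv
      have hW' := hW.erase_erase hv hu hvu
      have hk' : #((W.erase v).erase u) = 2 * k := by
        rw [card_erase_erase_of_mem hv hu hvu.ne]
        lia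
      rw [hW.card_indepSubsets_succ_of_adj hv hu hvu, ih hW' hk', ih hW' hk', Nat.choose_succ_succ']
      ring

theorem card_indepSubsets_filter_compl_adj (hW : InducesPerfectMatching G W) {k : ℕ}
    (hk : #W = 2 * k) (hv : v ∈ W) (r : ℕ) :
    #(indepSubsets G {w ∈ W | Gᶜ.Adj v w} r) = (k - 1).choose r * 2 ^ r := by
  obtain ⟨u, ⟨hu, hvu⟩, -⟩ := hW v hv
  rw [hW.filter_compl_adj_eq hv hu hvu]
  refine (hW.erase_erase hv hu hvu).card_indepSubsets ?_ r
  rw [card_erase_erase_of_mem hv hu hvu.ne]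
  lia

end InducesPerfectMatching

end InducedPerfectMatching

section RootedTree

variable {G : SimpleGraph V} {root v : V}

lemma existsUnique_adj_dist_eq_add_one (hG : G.IsTree) (hv : v ≠ root) :
    ∃! u, G.Adj v u ∧ G.dist root v = G.dist root u + 1 := by
  obtain ⟨p, hp⟩ := hG.connected.exists_walk_length_eq_dist v root
  cases p with
  | nil => exact absurd rfl hv
  | @cons _ u _ hvu p =>
    have hu : G.dist root v = G.dist root u + 1 := by
      have := dist_le p
      have := hG.dist_eq_dist_add_one_of_adj root hvu
      rw [Walk.length_cons] at hp
      simp only [G.dist_comm (u := root)] at *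
      lia
    refine ⟨u, ⟨hvu, hu⟩, fun w ⟨hvw, hw⟩ ↦ ?_⟩
    obtain ⟨q, hq⟩ := hG.connected.exists_walk_length_eq_dist w root
    have q_path : (q.cons hvw).IsPath := Walk.isPath_of_length_eq_dist _ <| by
      rw [Walk.length_cons, hq, G.dist_comm, ← hw, G.dist_comm]
    have p_path := Walk.isPath_of_length_eq_dist _ hp
    have := congr_arg Walk.snd ((hG.existsUnique_path v root).unique q_path p_path)
    simpa using this

lemma degree_eq_one_of_forall_adj_dist_le [Fintype V] (hG : G.IsTree) (hv : v ≠ root)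
    (hle : ∀ u, G.Adj v u → G.dist root u ≤ G.dist root v) : G.degree v = 1 := by
  obtain ⟨u, ⟨hvu, -⟩, hunique⟩ := existsUnique_adj_dist_eq_add_one hG hv
  refine degree_eq_one_iff_existsUnique_adj.2 ⟨u, hvu, fun w hvw ↦ hunique w ⟨hvw, ?_⟩⟩
  have := hG.dist_eq_dist_add_one_of_adj root hvw
  have := hle w hvw
  lia

end RootedTree

/-- The leaves of `G`, i.e. its vertices of degree one. -/
noncomputable def leaves [Fintype V] (G : SimpleGraph V) : Finset V := {v | G.degree v = 1}

lemma mem_leaves [Fintype V] {G : SimpleGraph V} {v : V} : v ∈ leaves G ↔ G.degree v = 1 := by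
  simp [leaves]

namespace IsDepthTwoClaw

variable [Fintype V] {G : SimpleGraph V} {root v : V}

lemma isTree (hG : IsDepthTwoClaw G root) : G.IsTree := hG.1.1

lemma dist_le_two (hG : IsDepthTwoClaw G root) (v : V) : G.dist root v ≤ 2 := by
  obtain ⟨w, -, hw⟩ := exists_max_image univ (G.dist root) ⟨root, mem_univ root⟩
  by_cases hwr : w = root
  · have := hw v (mem_univ v)
    rw [hwr, dist_self] at this
    lia
  · have w_leaf := degree_eq_one_of_forall_adj_dist_le hG.isTree hwr fun u _ ↦ hw u (mem_univ u)
    exact hG.2 w w_leaf ▸ hw v (mem_univ v)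

lemma mem_leaves_iff_compl_adj (hG : IsDepthTwoClaw G root) : v ∈ leaves G ↔ Gᶜ.Adj root v := by
  rw [mem_leaves, compl_adj]
  refine ⟨fun hv ↦ ?_, fun ⟨hne, hnadj⟩ ↦ ?_⟩
  · have hdist := hG.2 v hv
    refine ⟨?_, fun hadj ↦ ?_⟩
    · rintro rfl
      simp at hdist
    · simp [dist_eq_one_iff_adj.2 hadj] at hdist
  · have one_lt := hG.isTree.connected.one_lt_dist_of_ne_of_not_adj hne hnadj
    exact degree_eq_one_of_forall_adj_dist_le hG.isTree hne.symm fun u _ ↦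
      (hG.dist_le_two u).trans one_lt

lemma filter_compl_adj_root (hG : IsDepthTwoClaw G root) :
    ({v | Gᶜ.Adj root v} : Finset V) = leaves G := by
  ext v
  simp [hG.mem_leaves_iff_compl_adj]

lemma isIndepSet_leaves (hG : IsDepthTwoClaw G root) : G.IsIndepSet (leaves G) := by
  intro u hu v hv _ huv
  have hu_dist := hG.2 u (mem_leaves.1 hu)
  have hv_dist := hG.2 v (mem_leaves.1 hv)
  exact hG.isTree.dist_ne_of_adj root huv (hu_dist.trans hv_dist.symm)

lemma degree_eq_two_of_adj_root (hG : IsDepthTwoClaw G root) (hv : G.Adj root v) :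
    G.degree v = 2 := by
  have le_two := hG.1.2 v hv.ne'
  have pos : 0 < G.degree v := (G.degree_pos_iff_exists_adj v).2 ⟨root, hv.symm⟩
  have ne_one : G.degree v ≠ 1 := fun h ↦ (hG.mem_leaves_iff_compl_adj.1 (mem_leaves.2 h)).2 hv
  lia

lemma inducesPerfectMatching_erase_root (hG : IsDepthTwoClaw G root) :
    InducesPerfectMatching G (univ.erase root) := by
  intro v hv
  simp only [mem_erase, mem_univ, and_true] at hv ⊢
  by_cases hadj : G.Adj root v
  · have card_eq_one : #((G.neighborFinset v).erase root) = 1 := by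
      rw [card_erase_of_mem (by simpa using hadj.symm), card_neighborFinset_eq_degree,
        hG.degree_eq_two_of_adj_root hadj]
    simpa [card_eq_one_iff_existsUnique] using card_eq_one
  · have v_leaf : v ∈ leaves G := hG.mem_leaves_iff_compl_adj.2 ⟨hv.symm, hadj⟩
    obtain ⟨u, hvu, hunique⟩ := degree_eq_one_iff_existsUnique_adj.1 (mem_leaves.1 v_leaf)
    exact ⟨u, ⟨by rintro rfl; exact hadj hvu.symm, hvu⟩, fun w hw ↦ hunique w hw.2⟩

lemma card_erase_root (hG : IsDepthTwoClaw G root) :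
    #(univ.erase root) = 2 * #(leaves G) := by
  have erase_eq : univ.erase root = G.neighborFinset root ∪ leaves G := by
    ext v
    simp only [mem_erase, mem_univ, and_true, mem_union, mem_neighborFinset,
      hG.mem_leaves_iff_compl_adj, compl_adj]
    grind [G.ne_of_adj]
  have hdisj : Disjoint (G.neighborFinset root) (leaves G) := by
    simp +contextual [Finset.disjoint_left, hG.mem_leaves_iff_compl_adj]
  have card_eq : #(univ.erase root) = G.degree root + #(leaves G) := by
    rw [erase_eq, card_union_of_disjoint hdisj, card_neighborFinset_eq_degree]
  have sum_adj_root : ∑ v ∈ G.neighborFinset root, G.degree v = G.degree root * 2 :=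
    sum_const_nat fun v hv ↦ hG.degree_eq_two_of_adj_root ((G.mem_neighborFinset root v).1 hv)
  have sum_leaves : ∑ v ∈ leaves G, G.degree v = #(leaves G) :=
    (sum_const_nat fun v hv ↦ mem_leaves.1 hv).trans (mul_one _)
  have handshake : G.degree root + (G.degree root * 2 + #(leaves G)) =
      2 * #(univ.erase root) := by
    rw [← sum_adj_root, ← sum_leaves, ← sum_union hdisj, ← erase_eq,
      add_sum_erase _ (fun v ↦ G.degree v) (mem_univ root), sum_degrees_eq_twice_card_edges,
      card_erase_of_mem (mem_univ root), card_univ, ← hG.isTree.card_edgeFinset,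
      Nat.add_sub_cancel]
  lia

lemma card_ekrStar_root_succ (hG : IsDepthTwoClaw G root) (r : ℕ) :
    #(ekrStar G (r + 1) root) = (#(leaves G)).choose r := by
  rw [card_ekrStar_succ, hG.filter_compl_adj_root,
    card_indepSubsets_of_isIndepSet hG.isIndepSet_leaves]

lemma card_indepSubsets_erase_root_filter_compl_adj (hG : IsDepthTwoClaw G root) (hv : v ≠ root)
    (r : ℕ) :
    #(indepSubsets G {w ∈ univ.erase root | Gᶜ.Adj v w} r) =
      (#(leaves G) - 1).choose r * 2 ^ r :=
  hG.inducesPerfectMatching_erase_root.card_indepSubsets_filter_compl_adj hG.card_erase_root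
    (mem_erase.2 ⟨hv, mem_univ v⟩) r

lemma card_ekrStar_succ_of_adj_root (hG : IsDepthTwoClaw G root) (hv : G.Adj root v) (r : ℕ) :
    #(ekrStar G (r + 1) v) = (#(leaves G) - 1).choose r * 2 ^ r := by
  have root_notMem : root ∉ ({w | Gᶜ.Adj v w} : Finset V) := by simp [hv.symm]
  rw [card_ekrStar_succ, ← erase_eq_of_notMem root_notMem, ← filter_erase,
    hG.card_indepSubsets_erase_root_filter_compl_adj hv.ne']

lemma card_ekrStar_add_two_of_mem_leaves (hG : IsDepthTwoClaw G root) (hv : v ∈ leaves G)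
    (r : ℕ) :
    #(ekrStar G (r + 2) v) =
      (#(leaves G) - 1).choose (r + 1) * 2 ^ (r + 1) + (#(leaves G) - 1).choose r := by
  have root_compl_adj := hG.mem_leaves_iff_compl_adj.1 hv
  have root_mem : root ∈ ({w | Gᶜ.Adj v w} : Finset V) := by simpa using root_compl_adj.symm
  have filter_leaves : {w ∈ ({w | Gᶜ.Adj v w} : Finset V) | Gᶜ.Adj root w} =
      (leaves G).erase v := by
    ext w
    have hvw : w ∈ leaves G → ¬G.Adj v w := fun hw h ↦ hG.isIndepSet_leaves hv hw h.ne h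
    simp only [mem_filter, mem_univ, true_and, mem_erase, ← hG.mem_leaves_iff_compl_adj, compl_adj]
    tauto
  rw [card_ekrStar_succ, card_indepSubsets_succ root_mem, ← filter_erase,
    hG.card_indepSubsets_erase_root_filter_compl_adj root_compl_adj.ne', filter_leaves,
    card_indepSubsets_of_isIndepSet (hG.isIndepSet_leaves.mono (by simp)), card_erase_of_mem hv]

lemma card_ekrStar_add_two_le (hG : IsDepthTwoClaw G root) (hleaves : 0 < #(leaves G)) (r : ℕ)
    (v : V) :
    #(ekrStar G (r + 2) v) ≤
      (#(leaves G) - 1).choose (r + 1) * 2 ^ (r + 1) + (#(leaves G) - 1).choose r := by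
  by_cases hv : v ∈ leaves G
  · exact (hG.card_ekrStar_add_two_of_mem_leaves hv r).le
  by_cases hadj : G.Adj root v
  · exact (hG.card_ekrStar_succ_of_adj_root hadj (r + 1)).trans_le (Nat.le_add_right _ _)
  obtain rfl : root = v := by
    by_contra hne
    exact hv (hG.mem_leaves_iff_compl_adj.2 ⟨hne, hadj⟩)
  calc #(ekrStar G (r + 2) root)
      = (#(leaves G)).choose (r + 1) := hG.card_ekrStar_root_succ (r + 1)
    _ = (#(leaves G) - 1).choose (r + 1) + (#(leaves G) - 1).choose r := by
      rw [Nat.choose_eq_choose_pred_add hleaves r.succ_pos, add_comm, Nat.succ_sub_one]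
    _ ≤ (#(leaves G) - 1).choose (r + 1) * 2 ^ (r + 1) + (#(leaves G) - 1).choose r := by
      gcongr
      exact Nat.le_mul_of_pos_right _ (by positivity)

end IsDepthTwoClaw

theorem depthTwoClaw_largest_star_general [Fintype V] (n r : ℕ) (hn : 0 < n) (hr : 0 < r)
    (G : SimpleGraph V) (root : V) (hG : IsDepthTwoClaw G root)
    (hleaves : (univ.filter fun v => G.degree v = 1).card = n) :
    (∀ x, G.degree x = 1 →
      (ekrStar G r x).card =
        (n - 1).choose (r - 1) * 2 ^ (r - 1) + (if 2 ≤ r then (n - 1).choose (r - 2) else 0)) ∧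
    (∀ v, (ekrStar G r v).card ≤
        (n - 1).choose (r - 1) * 2 ^ (r - 1) + (if 2 ≤ r then (n - 1).choose (r - 2) else 0)) := by
  obtain rfl : #(leaves G) = n := hleaves
  match r, hr with
  | 1, _ => simp [card_ekrStar_one]
  | s + 2, _ =>
    rw [if_pos (Nat.le_add_left 2 s)]
    exact ⟨fun x hx ↦ hG.card_ekrStar_add_two_of_mem_leaves (mem_leaves.2 hx) s,
      hG.card_ekrStar_add_two_le hn s⟩

/-- Let `G` be a depth-two claw with `n` leaves, `n ≥ r ≥ 1`.  Every
`r`-star centred at a leaf has size `C(n−1, r−1)·2^(r−1) + C(n−1, r−2)` (where the second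
binomial coefficient is `0` when `r − 2 < 0`), and this is the maximum size of an `r`-star. -/
theorem depthTwoClaw_largest_star {V : Type*} [Fintype V] (n r : ℕ)
    (hn : 0 < n) (hr : 0 < r) (hrn : r ≤ n)
    (G : SimpleGraph V) (root : V) (hG : IsDepthTwoClaw G root)
    (hleaves : (univ.filter fun v => G.degree v = 1).card = n) :
    (∀ x, G.degree x = 1 →
      (ekrStar G r x).card =
        (n - 1).choose (r - 1) * 2 ^ (r - 1) + (if 2 ≤ r then (n - 1).choose (r - 2) else 0)) ∧
    (∀ v, (ekrStar G r v).card ≤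
        (n - 1).choose (r - 1) * 2 ^ (r - 1) + (if 2 ≤ r then (n - 1).choose (r - 2) else 0)) :=
  depthTwoClaw_largest_star_general n r hn hr G root hG hleaves
end

section
/- Let m, k and a be positive integers, let b be a nonnegative integer, and let G be the disjoint union of m copies of the (k,a)-claw. Then the number of independent sets of G that contain the roots of at least b of the m (k,a)-claws equals the sum over i from b to m of C(m, i)·F(a−1)^(i·k)·F(a)^((m−i)·k). -/
open Finset SimpleGraph
open scoped Classical

variable {V : Type*}

/-- The number of independent sets (of any size) of `G` containing the vertex `v`. -/
noncomputable def countContaining [Fintype V] (G : SimpleGraph V) (v : V) : ℕ :=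
  ((indepSets G).filter fun A => v ∈ A).card

/-- `F a` is the number of independent sets (including `∅`) of the path on `a` vertices. -/
noncomputable def F (a : ℕ) : ℕ := (indepSets (pathGraph a)).card

/-- The `(k,a)`-claw: an elongated claw with `k` limbs each of length `a`.  The vertex
`none` is the root and `some (i, j)` is the vertex of limb `i` at distance `j + 1` from
the root (so `some (i, a − 1)` is the leaf of limb `i`). -/
def kaClaw (k a : ℕ) : SimpleGraph (Option (Fin k × Fin a)) :=
  SimpleGraph.fromRel (fun x y =>
    (∃ i : Fin k, ∃ j : Fin a, x = none ∧ y = some (i, j) ∧ (j : ℕ) = 0) ∨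
    (∃ (i : Fin k) (j j' : Fin a), x = some (i, j) ∧ y = some (i, j') ∧ (j' : ℕ) = (j : ℕ) + 1))

/-- The disjoint union of `m` copies of the graph `H`. -/
def copies (m : ℕ) {W : Type*} (H : SimpleGraph W) : SimpleGraph (Fin m × W) where
  Adj := fun x y => x.1 = y.1 ∧ H.Adj x.2 y.2
  symm := ⟨fun _ _ h => ⟨h.1.symm, h.2.symm⟩⟩
  loopless := ⟨fun x h => H.loopless.irrefl x.2 h.2⟩

/-!
A set of vertices of `m` disjoint copies of `H` is a family of `m` sets of vertices of `H`, and it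
is independent iff every member of the family is. Grouping the families by the set of copies in
which a given vertex is chosen yields a binomial-type sum, valid for every graph `H`. Deleting the
root of a `(k,a)`-claw leaves `k` copies of the path on `a` vertices; an independent set through the
root must moreover avoid the first vertex of each path, which leaves `k` paths on `a - 1` vertices.
-/

section PiFinset

variable {ι α : Type*} [Fintype ι] [DecidableEq ι] (s : Finset α) (p : α → Prop) [DecidablePred p]

theorem card_piFinset_filter_eq (S : Finset ι) :
    #{f ∈ Fintype.piFinset fun _ : ι => s | ({i | p (f i)} : Finset ι) = S} =
      #{x ∈ s | p x} ^ #S * #{x ∈ s | ¬ p x} ^ (Fintype.card ι - #S) := by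
  have filter_eq : {f ∈ Fintype.piFinset fun _ : ι => s | ({i | p (f i)} : Finset ι) = S} =
      Fintype.piFinset fun i => {x ∈ s | p x ↔ i ∈ S} := by
    ext f
    simp [Finset.ext_iff, forall_and]
  have card_factor (i : ι) : #{x ∈ s | p x ↔ i ∈ S} =
      if i ∈ S then #{x ∈ s | p x} else #{x ∈ s | ¬ p x} := by
    split_ifs with hi <;> simp [hi]
  rw [filter_eq, Fintype.card_piFinset, prod_congr rfl fun i _ => card_factor i, prod_ite,
    prod_const, prod_const, filter_mem_eq_inter, univ_inter, filter_notMem_eq_sdiff,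
    ← compl_eq_univ_sdiff, card_compl]

theorem card_piFinset_filter_le_card (b : ℕ) :
    #{f ∈ Fintype.piFinset fun _ : ι => s | b ≤ #{i | p (f i)}} =
      ∑ j ∈ Icc b (Fintype.card ι),
        (Fintype.card ι).choose j *
          (#{x ∈ s | p x} ^ j * #{x ∈ s | ¬ p x} ^ (Fintype.card ι - j)) := by
  set weight : ℕ → ℕ := fun j => #{x ∈ s | p x} ^ j * #{x ∈ s | ¬ p x} ^ (Fintype.card ι - j)
  have card_fiber (S : Finset ι) :
      #{f ∈ {f ∈ Fintype.piFinset fun _ : ι => s | b ≤ #{i | p (f i)}} |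
          ({i | p (f i)} : Finset ι) = S} = if b ≤ #S then weight #S else 0 := by
    rw [filter_filter]
    split_ifs with hb
    · refine .trans ?_ (card_piFinset_filter_eq s p S)
      congr 1 with f
      grind
    · rw [card_eq_zero, filter_eq_empty_iff]
      grind
  calc #{f ∈ Fintype.piFinset fun _ : ι => s | b ≤ #{i | p (f i)}}
      = ∑ S ∈ (univ : Finset ι).powerset, if b ≤ #S then weight #S else 0 := by
        rw [card_eq_sum_card_fiberwise (f := fun f => ({i | p (f i)} : Finset ι))
          (t := univ.powerset) fun _ _ => by simp]
        exact sum_congr rfl fun S _ => card_fiber S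
    _ = ∑ j ∈ range (Fintype.card ι + 1),
          if b ≤ j then (Fintype.card ι).choose j * weight j else 0 := by
        rw [sum_powerset_apply_card fun j => if b ≤ j then weight j else 0, card_univ]
        simp only [smul_eq_mul, mul_ite, mul_zero]
    _ = ∑ j ∈ Icc b (Fintype.card ι), (Fintype.card ι).choose j * weight j := by
        rw [← sum_filter]
        congr 1 with j
        grind

end PiFinset

/-- The correspondence between a finite set of pairs and the family of its slices over the first
coordinate; it splits a vertex set of `copies m H` into its parts in the individual copies. -/
noncomputable def sliceEquiv (ι α : Type*) [Fintype ι] [Fintype α] :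
    Finset (ι × α) ≃ (ι → Finset α) where
  toFun A i := {x | (i, x) ∈ A}
  invFun f := {z | z.2 ∈ f z.1}
  left_inv A := by simp
  right_inv f := by simp

theorem mem_sliceEquiv {ι α : Type*} [Fintype ι] [Fintype α] {A : Finset (ι × α)} {i : ι} {x : α} :
    x ∈ sliceEquiv ι α A i ↔ (i, x) ∈ A := by
  simp [sliceEquiv]

section IndepSets

variable {W : Type*} [Fintype V] [Fintype W]

/-- The number of independent sets of `G` not containing the vertex `v`, the counterpart of
`countContaining`. -/
noncomputable def countAvoiding (G : SimpleGraph V) (v : V) : ℕ :=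
  #{A ∈ indepSets G | v ∉ A}

theorem mem_indepSets {G : SimpleGraph V} {A : Finset V} :
    A ∈ indepSets G ↔ ∀ x ∈ A, ∀ y ∈ A, ¬ G.Adj x y := by
  simp [indepSets]

theorem map_mem_indepSets_iff (G : SimpleGraph W) (f : V ↪ W) {A : Finset V} :
    A.map f ∈ indepSets G ↔ A ∈ indepSets (G.comap f) := by
  simp [mem_indepSets]

theorem card_indepSets_comap (G : SimpleGraph W) (f : V ↪ W) :
    #(indepSets (G.comap f)) = #{A ∈ indepSets G | ∀ x ∈ A, x ∈ Set.range f} := by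
  rw [← card_map (mapEmbedding f).toEmbedding]
  congr 1 with A
  simp only [mem_map, mem_filter, RelEmbedding.coe_toEmbedding, mapEmbedding_apply]
  constructor
  · rintro ⟨B, hB, rfl⟩
    exact ⟨(map_mem_indepSets_iff G f).2 hB, by simp⟩
  · rintro ⟨hA, hrange⟩
    obtain ⟨B, -, rfl⟩ := subset_map_iff.1 (show A ⊆ univ.map f by simpa [subset_iff] using hrange)
    exact ⟨B, (map_mem_indepSets_iff G f).1 hA, rfl⟩

theorem countAvoiding_none (G : SimpleGraph (Option V)) :
    countAvoiding G none = #(indepSets (G.comap some)) := by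
  refine .trans ?_ (card_indepSets_comap G .some).symm
  rw [countAvoiding]
  congr 1 with A
  simp [Option.forall]

theorem insertNone_mem_indepSets_iff (G : SimpleGraph (Option V)) {B : Finset V} :
    insertNone B ∈ indepSets G ↔
      B ∈ indepSets (G.comap some) ∧ ∀ v ∈ B, ¬ G.Adj none (some v) := by
  simp only [mem_indepSets, Option.forall, none_mem_insertNone, some_mem_insertNone, comap_adj,
    G.adj_comm (some _) none, SimpleGraph.irrefl]
  grind

theorem countContaining_none (G : SimpleGraph (Option V)) :
    countContaining G none =
      #{B ∈ indepSets (G.comap some) | ∀ v ∈ B, ¬ G.Adj none (some v)} := by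
  rw [countContaining, ← card_map (s := filter _ (indepSets (G.comap some))) insertNone.toEmbedding]
  congr 1 with A
  simp only [mem_map, mem_filter, RelEmbedding.coe_toEmbedding]
  constructor
  · rintro ⟨hA, hnone⟩
    have hA_eq : insertNone (eraseNone A) = A := by
      rw [insertNone_eraseNone, insert_eq_of_mem hnone]
    exact ⟨eraseNone A, (insertNone_mem_indepSets_iff G).1 (hA_eq.symm ▸ hA), hA_eq⟩
  · rintro ⟨B, hB, rfl⟩
    exact ⟨(insertNone_mem_indepSets_iff G).2 hB, none_mem_insertNone⟩

theorem pathGraph_comap_succEmb (n : ℕ) :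
    (pathGraph (n + 1)).comap (Fin.succEmb n) = pathGraph n := by
  ext i j
  simp [pathGraph_adj]

theorem countAvoiding_pathGraph_zero (n : ℕ) : countAvoiding (pathGraph (n + 1)) 0 = F n := by
  rw [F, countAvoiding, ← pathGraph_comap_succEmb n, card_indepSets_comap]
  congr 1 with A
  simp

section Copies

variable (m : ℕ) (H : SimpleGraph W)

theorem mem_indepSets_copies {A : Finset (Fin m × W)} :
    A ∈ indepSets (copies m H) ↔ ∀ i, sliceEquiv (Fin m) W A i ∈ indepSets H := by
  simp only [mem_indepSets, mem_sliceEquiv, copies, Prod.forall]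
  grind

theorem card_indepSets_copies : #(indepSets (copies m H)) = #(indepSets H) ^ m := by
  rw [← Fintype.card_piFinset_const]
  exact card_equiv (sliceEquiv (Fin m) W) fun A => by
    simp only [mem_indepSets_copies, Fintype.mem_piFinset]

theorem card_indepSets_copies_filter_forall_notMem (w : W) :
    #{A ∈ indepSets (copies m H) | ∀ i, (i, w) ∉ A} = countAvoiding H w ^ m := by
  rw [countAvoiding, ← Fintype.card_piFinset_const]
  exact card_equiv (sliceEquiv (Fin m) W) fun A => by
    simp only [mem_filter, mem_indepSets_copies, Fintype.mem_piFinset, mem_sliceEquiv, forall_and]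

theorem card_indepSets_copies_filter_le_card [DecidableEq W] (w : W) (b : ℕ) :
    #{A ∈ indepSets (copies m H) | b ≤ #{i | (i, w) ∈ A}} =
      ∑ j ∈ Icc b m, m.choose j * (countContaining H w ^ j * countAvoiding H w ^ (m - j)) := by
  calc #{A ∈ indepSets (copies m H) | b ≤ #{i | (i, w) ∈ A}}
      = #{f ∈ Fintype.piFinset fun _ : Fin m => indepSets H | b ≤ #{i | w ∈ f i}} :=
        card_equiv (sliceEquiv (Fin m) W) fun A => by
          simp only [mem_filter, mem_indepSets_copies, Fintype.mem_piFinset, mem_sliceEquiv]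
    _ = ∑ j ∈ Icc b m, m.choose j * (countContaining H w ^ j * countAvoiding H w ^ (m - j)) := by
        rw [card_piFinset_filter_le_card (indepSets H) (w ∈ ·), Fintype.card_fin]
        simp only [countContaining, countAvoiding]
        congr!

end Copies

end IndepSets

section KaClaw

variable (k a : ℕ)

theorem kaClaw_adj_none_some {i : Fin k} {j : Fin a} :
    (kaClaw k a).Adj none (some (i, j)) ↔ (j : ℕ) = 0 := by
  simp [kaClaw]

theorem kaClaw_comap_some : (kaClaw k a).comap some = copies k (pathGraph a) := by
  ext ⟨i, j⟩ ⟨i', j'⟩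
  simp only [kaClaw, copies, comap_adj, fromRel_adj, pathGraph_adj]
  grind

theorem countAvoiding_kaClaw_root : countAvoiding (kaClaw k a) none = F a ^ k := by
  rw [countAvoiding_none, kaClaw_comap_some, card_indepSets_copies, F]

theorem countContaining_kaClaw_root :
    countContaining (kaClaw k (a + 1)) none = F a ^ k := by
  rw [countContaining_none, kaClaw_comap_some, ← countAvoiding_pathGraph_zero,
    ← card_indepSets_copies_filter_forall_notMem]
  congr 1 with A
  simp only [mem_filter, Prod.forall, kaClaw_adj_none_some, Fin.val_eq_zero_iff]
  grind

end KaClaw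

/-- If `G` is the disjoint union of `m` copies of the `(k,a)`-claw, then
the number of independent sets of `G` containing the roots of at least `b` of the claws is
`∑_{i=b}^{m} C(m,i)·F(a−1)^{ik}·F(a)^{(m−i)k}`. -/
theorem copies_kaClaw_indepSets_count (m k a : ℕ) (hm : 0 < m) (hk : 0 < k) (ha : 0 < a)
    (b : ℕ) :
    ((indepSets (copies m (kaClaw k a))).filter fun A =>
        b ≤ (univ.filter fun i : Fin m =>
          (i, (none : Option (Fin k × Fin a))) ∈ A).card).card =
      ∑ i ∈ Finset.Icc b m, m.choose i * F (a - 1) ^ (i * k) * F a ^ ((m - i) * k) := by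
  obtain ⟨n, rfl⟩ := Nat.exists_eq_add_one.2 ha
  rw [card_indepSets_copies_filter_le_card, countContaining_kaClaw_root, countAvoiding_kaClaw_root]
  refine sum_congr rfl fun j _ => ?_
  rw [Nat.add_sub_cancel, mul_assoc, mul_comm j, mul_comm (m - j), pow_mul, pow_mul]
end
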